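/- arXiv:2103.03452 — 6 statements merged into one kernel-verified Lean document; each statement's English description precedes it below -/
import Mathlib

section
/- One-step expected descent for FedDR (Lemma A.6). Fix γ₁, γ₄ > 0 and stepsizes 0 < α < min{8, √(17+64γ₄) − 1}/(4(1+4γ₄)) and 0 < η < (√((4−α)² − 16α²γ₄(1+4γ₄)) − α)/(4L(1+2αγ₄)). Suppose the current state (y_i, z_i, x_i, e_i)_{i=1}^n and x̄ ∈ dom g satisfy y_i = z_i + η∇f_i(z_i), x_i = z_i + e_i, ‖e_i‖ ≤ ε_i for all i. Let S be a random subset of {1,…,n} with P(i ∈ S) = p_i ≥ p̂ > 0 for all i, and define the (random) next state by: for i ∈ S, y'_i = y_i + α(x̄ − x_i), z'_i = prox_{ηf_i}(y'_i), x'_i = z'_i + e'_i with ‖e'_i‖ ≤ ε'_i almost surely; for i ∉ S, (y'_i, z'_i, x'_i, e'_i) = (y_i, z_i, x_i, e_i) and ε'_i ≥ ‖e_i‖; and x̄' = prox_{ηg}((1/n)Σ_{i=1}^n (2x'_i − y'_i)). Let β := p̂α[2 − α(Lη+1) − 2L²η² − 4γ₄α(1+L²η²)]/(2η(1+γ₁)(1+L²η²)),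 ρ₂ := 2(1+ηL)²/(γ₄ηα²) + (1+η²L²)/η + α[2 − α(Lη+1) − 2L²η² − 4αγ₄(1+L²η²)]/(2η(1+L²η²)γ₁), ρ₁ := ρ₂ + (1+η²L²)/η. Then (β/(2n)) Σ_{i=1}^n ‖x̄ − x_i‖² ≤ V_η(x̄; x₁,…,xₙ) − E[V_η(x̄'; x'₁,…,x'ₙ)] + (1/n) Σ_{i=1}^n (ρ₁ ε_i² + ρ₂ (ε'_i)²). -/
open MeasureTheory
open scoped RealInnerProductSpace

section Helpers

variable {E : Type*} [NormedAddCommGroup E] [InnerProductSpace ℝ E] [CompleteSpace E]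

lemma aux_hasDerivAt (f : E → ℝ) (hf : Differentiable ℝ f) (a v : E) (t : ℝ) :
    HasDerivAt (fun s : ℝ => f (a + s • v)) ⟪gradient f (a + t • v), v⟫ t := by
  have h1 : HasFDerivAt f (InnerProductSpace.toDual ℝ E (gradient f (a + t • v))) (a + t • v) :=
    (hf (a + t • v)).hasGradientAt.hasFDerivAt
  have h2 : HasDerivAt (fun s : ℝ => a + s • v) v t := by
    simpa using ((hasDerivAt_id t).smul_const v).const_add a
  have h3 := h1.comp_hasDerivAt t h2
  exact h3

lemma aux_descent (f : E → ℝ) (hf : Differentiable ℝ f) (L : ℝ)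
    (hlip : ∀ u v, ‖gradient f u - gradient f v‖ ≤ L * ‖u - v‖) (a b : E) :
    f a + ⟪gradient f a, b - a⟫ - L / 2 * ‖b - a‖ ^ 2 ≤ f b := by
  set v := b - a with hv
  let h : ℝ → ℝ := fun t => f (a + t • v) - t * ⟪gradient f a, v⟫ + L / 2 * t ^ 2 * ‖v‖ ^ 2
  have hd : ∀ t, HasDerivAt h
      (⟪gradient f (a + t • v), v⟫ - ⟪gradient f a, v⟫ + L * t * ‖v‖ ^ 2) t := by
    intro t
    have h1 := aux_hasDerivAt f hf a v t
    have h2 : HasDerivAt (fun t : ℝ => t * ⟪gradient f a, v⟫) (⟪gradient f a, v⟫) t := by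
      simpa using (hasDerivAt_id t).mul_const (⟪gradient f a, v⟫)
    have h3 : HasDerivAt (fun t : ℝ => L / 2 * t ^ 2 * ‖v‖ ^ 2) (L * t * ‖v‖ ^ 2) t := by
      have := (((hasDerivAt_pow 2 t).const_mul (L / 2)).mul_const (‖v‖ ^ 2))
      refine this.congr_deriv ?_
      push_cast
      ring
    exact (h1.sub h2).add h3
  have hm : MonotoneOn h (Set.Icc 0 1) := by
    apply monotoneOn_of_deriv_nonneg (convex_Icc 0 1)
    · exact fun t _ => (hd t).continuousAt.continuousWithinAt
    · exact fun t _ => (hd t).differentiableAt.differentiableWithinAt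
    · intro t ht
      rw [interior_Icc] at ht
      rw [(hd t).deriv, ← inner_sub_left]
      have h1 := hlip (a + t • v) a
      have h2 := abs_real_inner_le_norm (gradient f (a + t • v) - gradient f a) v
      have h3 : ‖a + t • v - a‖ = t * ‖v‖ := by
        rw [add_sub_cancel_left, norm_smul, Real.norm_of_nonneg ht.1.le]
      rw [h3] at h1
      have h4 := mul_le_mul_of_nonneg_right h1 (norm_nonneg v)
      have h5 := (abs_le.1 h2).1
      nlinarith
  have := hm (Set.left_mem_Icc.2 zero_le_one) (Set.right_mem_Icc.2 zero_le_one) zero_le_one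
  simp only [h] at this
  have hb : a + (1 : ℝ) • v = b := by simp [hv]
  rw [hb] at this
  simp only [zero_smul, add_zero, zero_mul, sub_zero, one_mul, one_pow, mul_one, ne_eq,
    OfNat.ofNat_ne_zero, not_false_eq_true, zero_pow, mul_zero] at this
  linarith

lemma aux_prox (f : E → ℝ) (hf : Differentiable ℝ f) (η : ℝ) (hη : 0 < η) (y z : E)
    (h : IsMinOn (fun u => f u + (1 / (2 * η)) * ‖u - y‖ ^ 2) Set.univ z) :
    y = z + η • gradient f z := by
  have key : ∀ v : E, ⟪gradient f z, v⟫ + (1 / η) * ⟪z - y, v⟫ = 0 := by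
    intro v
    let φ : ℝ → ℝ := fun s => f (z + s • v)
      + (1 / (2 * η)) * (‖z - y‖ ^ 2 + s * (2 * ⟪z - y, v⟫) + s ^ 2 * ‖v‖ ^ 2)
    have hφ : ∀ s, φ s = f (z + s • v) + (1 / (2 * η)) * ‖z + s • v - y‖ ^ 2 := by
      intro s
      have : z + s • v - y = (z - y) + s • v := by abel
      simp only [φ]
      rw [this, norm_add_sq_real, inner_smul_right, norm_smul, mul_pow, Real.norm_eq_abs, sq_abs]
      ring
    have hd : HasDerivAt φ (⟪gradient f z, v⟫ + (1 / η) * ⟪z - y, v⟫) 0 := by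
      have h1 := aux_hasDerivAt f hf z v 0
      have h2 : HasDerivAt (fun s : ℝ => ‖z - y‖ ^ 2 + s * (2 * ⟪z - y, v⟫) + s ^ 2 * ‖v‖ ^ 2)
          (2 * ⟪z - y, v⟫) 0 := by
        have := (((hasDerivAt_id (0 : ℝ)).mul_const (2 * ⟪z - y, v⟫)).const_add
          (‖z - y‖ ^ 2)).add ((hasDerivAt_pow 2 (0 : ℝ)).mul_const (‖v‖ ^ 2))
        refine this.congr_deriv ?_
        simp
      refine (h1.add (h2.const_mul (1 / (2 * η)))).congr_deriv ?_
      simp only [zero_smul, add_zero]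
      field_simp
    have hmin : IsLocalMin φ 0 := by
      refine Filter.Eventually.of_forall fun s => ?_
      rw [hφ, hφ]
      have := h (Set.mem_univ (z + s • v))
      simpa using this
    exact hmin.hasDerivAt_eq_zero hd
  have h0 : gradient f z + (1 / η) • (z - y) = 0 := by
    have := key (gradient f z + (1 / η) • (z - y))
    rw [← real_inner_smul_left, ← inner_add_left] at this
    exact inner_self_eq_zero.1 this
  have h1 : η • gradient f z + (z - y) = 0 := by
    have := congrArg (fun w => η • w) h0
    simpa [smul_add, smul_smul, hη.ne'] using this
  have : z + η • gradient f z - y = 0 := by rw [← h1]; abel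
  exact (sub_eq_zero.1 this).symm

lemma aux_strong (g : E → ℝ) (hg : ConvexOn ℝ Set.univ g) (c : ℝ) (hc : 0 < c) (u p w : E)
    (h : IsMinOn (fun w => g w + c * ‖w - u‖ ^ 2) Set.univ p) :
    g p + c * ‖p - u‖ ^ 2 + c * ‖w - p‖ ^ 2 ≤ g w + c * ‖w - u‖ ^ 2 := by
  have key : ∀ t : ℝ, 0 < t → t < 1 →
      g p + c * ‖p - u‖ ^ 2 + c * ‖w - p‖ ^ 2 ≤ g w + c * ‖w - u‖ ^ 2 + t * (c * ‖w - p‖ ^ 2) := by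
    intro t ht ht1
    have h1 : g p + c * ‖p - u‖ ^ 2 ≤ g ((1 - t) • p + t • w)
      + c * ‖(1 - t) • p + t • w - u‖ ^ 2 := h (Set.mem_univ _)
    have h2 := hg.2 (Set.mem_univ p) (Set.mem_univ w) (by linarith : 0 ≤ 1 - t) ht.le (by ring)
    simp only [smul_eq_mul] at h2
    have e1 : (1 - t) • p + t • w - u = (p - u) + t • (w - p) := by module
    have e2 : w - u = (p - u) + (w - p) := by abel
    have h3 : ‖(1 - t) • p + t • w - u‖ ^ 2
        = ‖p - u‖ ^ 2 + 2 * t * ⟪p - u, w - p⟫ + t ^ 2 * ‖w - p‖ ^ 2 := by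
      rw [e1, norm_add_sq_real, inner_smul_right, norm_smul, mul_pow, Real.norm_eq_abs, sq_abs]
      ring
    have h4 : ‖w - u‖ ^ 2 = ‖p - u‖ ^ 2 + 2 * ⟪p - u, w - p⟫ + ‖w - p‖ ^ 2 := by
      rw [e2, norm_add_sq_real]
    rw [h3] at h1
    rw [h4]
    have h5 : 0 ≤ t * (g w - g p + c * (2 * ⟪p - u, w - p⟫) + t * (c * ‖w - p‖ ^ 2)) := by
      nlinarith
    have h6 := nonneg_of_mul_nonneg_right h5 ht
    linarith
  by_contra hcon
  push Not at hcon
  set N := c * ‖w - p‖ ^ 2 with hN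
  have hN0 : 0 ≤ N := by positivity
  set gap := g p + c * ‖p - u‖ ^ 2 + N - (g w + c * ‖w - u‖ ^ 2) with hgap
  have hg0 : 0 < gap := by linarith
  have h1 := key (gap / (2 * (N + gap))) (by positivity) (by
    rw [div_lt_one (by positivity)]; linarith)
  have h2 : gap / (2 * (N + gap)) * N < gap := by
    rw [div_mul_eq_mul_div, div_lt_iff₀ (by positivity)]
    nlinarith
  linarith

lemma aux_scalar (l α γ B q D X : ℝ) (hl : 0 < l) (hα : 0 < α) (hγ : 0 < γ) (hB : 0 < B)
    (hq : q = 1 + l ^ 2) (hBdef : B = 2 - α * (l + 1) - 2 * l ^ 2 - 4 * γ * α * q)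
    (hD : 0 ≤ D) (hX : 0 ≤ X) :
    B / (2 * q) * ((1 + l) * D + X) ^ 2 ≤
      (2 - α * (l + 1) - 2 * l ^ 2) * D ^ 2 - 2 * X * ((1 + l) * D) + 2 / (γ * α) * X ^ 2 := by
  have hq0 : 0 < q := by rw [hq]; positivity
  set k := γ * α with hk
  have hk0 : 0 < k := by positivity
  have hBk : B + 4 * k * q ≤ 2 * (1 - l ^ 2) := by nlinarith
  have hkB : 4 * k * q * B ≤ (1 - l ^ 2) ^ 2 := by
    have hp : 0 < 4 * k * q := by positivity
    nlinarith [sq_nonneg (B - 4 * k * q)]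
  have hq2 : (1 + l) ^ 2 ≤ 2 * q := by rw [hq]; nlinarith [sq_nonneg (1 - l)]
  have hl1 : l < 1 := by
    have : 0 < 4 * k * q := by positivity
    nlinarith
  have s1 : 2 * X * ((1 + l) * D) ≤ 4 * k * q * D ^ 2 + 1 / (2 * k) * X ^ 2 := by
    have a1 : 2 * k * ((1 + l) * D) ^ 2 ≤ 4 * k * q * D ^ 2 := by
      have : 0 ≤ k * D ^ 2 := by positivity
      nlinarith
    have a2 : 2 * X * ((1 + l) * D) ≤ 2 * k * ((1 + l) * D) ^ 2 + 1 / (2 * k) * X ^ 2 := by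
      have : 2 * k * ((1 + l) * D) ^ 2 + 1 / (2 * k) * X ^ 2 - 2 * X * ((1 + l) * D)
        = 1 / (2 * k) * (2 * k * ((1 + l) * D) - X) ^ 2 := by field_simp; ring
      have : 0 ≤ 1 / (2 * k) * (2 * k * ((1 + l) * D) - X) ^ 2 := by positivity
      linarith
    linarith
  have s2 : B / (2 * q) * ((1 + l) * D + X) ^ 2 ≤ B * D ^ 2 + 3 / (2 * k) * X ^ 2 := by
    have hs : 0 < 1 - l := by linarith
    -- inverse form of hkB
    have b1 : 4 * q * B * X ^ 2 / (1 - l ^ 2) ^ 2 ≤ 1 / k * X ^ 2 := by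
      have : 0 < 1 - l ^ 2 := by nlinarith
      rw [div_mul_eq_mul_div, div_le_div_iff₀ (by positivity) hk0]
      nlinarith [mul_le_mul_of_nonneg_right hkB (sq_nonneg X)]
    set u := X / (1 - l) with hu
    have hXu : X = (1 - l) * u := by rw [hu]; field_simp
    have hu0 : 0 ≤ u := by positivity
    have b2 : 4 * q * B * X ^ 2 / (1 - l ^ 2) ^ 2 = 4 * q * B * u ^ 2 / (1 + l) ^ 2 := by
      have : (1 - l ^ 2) = (1 - l) * (1 + l) := by ring
      rw [this, hXu]
      field_simp
    have b3 : 2 * B * u ^ 2 ≤ 4 * q * B * u ^ 2 / (1 + l) ^ 2 := by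
      rw [le_div_iff₀ (by positivity)]
      have : 0 ≤ B * u ^ 2 := by positivity
      nlinarith
    have b4 : 2 * B * u ^ 2 ≤ 1 / k * X ^ 2 := by linarith
    have b5 : 3 / (2 * k) * X ^ 2 = 3 / 2 * (1 / k * X ^ 2) := by field_simp
    rw [b5, div_mul_eq_mul_div, div_le_iff₀ (by positivity)]
    have b6 : ((1 + l) * D + X) ^ 2 ≤ 2 * q * D ^ 2 + 2 * q * (3 * u ^ 2) := by
      rw [hXu, hq]
      nlinarith [sq_nonneg ((1 - l) * D - (1 + l) * u), sq_nonneg u, mul_nonneg hl.le (sq_nonneg u),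
        mul_nonneg (sq_nonneg l) (sq_nonneg u)]
    have b7 := mul_le_mul_of_nonneg_left b6 hB.le
    have b8 := mul_le_mul_of_nonneg_right b4 hq0.le
    nlinarith
  have s3 : 2 / k * X ^ 2 = 1 / (2 * k) * X ^ 2 + 3 / (2 * k) * X ^ 2 := by field_simp; ring
  have s4 : 2 - α * (l + 1) - 2 * l ^ 2 = B + 4 * k * q := by rw [hBdef, hk]; ring
  rw [s3, s4]
  nlinarith

set_option maxHeartbeats 1000000 in
lemma aux_agent (f : E → ℝ) (hf : Differentiable ℝ f) (L : ℝ) (hL : 0 < L)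
    (hlip : ∀ u v, ‖gradient f u - gradient f v‖ ≤ L * ‖u - v‖)
    (α η γ B : ℝ) (hα : 0 < α) (hη : 0 < η) (hγ : 0 < γ) (hB : 0 < B)
    (hBdef : B = 2 - α * (L * η + 1) - 2 * L ^ 2 * η ^ 2 - 4 * γ * α * (1 + L ^ 2 * η ^ 2))
    (xb y z x e y' z' x' e' : E) (hy : y = z + η • gradient f z) (hx : x = z + e)
    (hy' : y' = z' + η • gradient f z') (hx' : x' = z' + e') (hyy : y' = y + α • (xb - x)) :
    f x' + ⟪gradient f x', xb - x'⟫ + (1 / (2 * η)) * ‖xb - x'‖ ^ 2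
      ≤ f x + ⟪gradient f x, xb - x⟫ + (1 / (2 * η)) * ‖xb - x‖ ^ 2
        - α * B / (4 * η * (1 + L ^ 2 * η ^ 2)) * ‖xb - x‖ ^ 2
        + 2 * (1 + η * L) ^ 2 / (γ * η * α ^ 2) * (‖e‖ ^ 2 + ‖e'‖ ^ 2) := by
  set l := L * η with hl
  have hl0 : 0 < l := by positivity
  set r := xb - x with hr
  set d := x' - x with hd
  set G := gradient f x' - gradient f x with hG
  set ξ := α • r - d - η • G with hξ
  have hGn : η * ‖G‖ ≤ l * ‖d‖ := by
    have := mul_le_mul_of_nonneg_left (hlip x' x) hη.le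
    rw [hl]; linarith
  have hξn : ‖ξ‖ ≤ (1 + l) * (‖e‖ + ‖e'‖) := by
    have h1 : ξ = (e - e') + (η • (gradient f x - gradient f z)
        - η • (gradient f x' - gradient f z')) := by
      have : α • r = y' - y := by rw [hyy]; abel
      rw [hξ, this, hy, hy', hd, hx, hx', hG, hx, hx']
      module
    have h2 := hlip x z
    have h3 := hlip x' z'
    have h4 : x - z = e := by rw [hx]; abel
    have h5 : x' - z' = e' := by rw [hx']; abel
    rw [h4] at h2
    rw [h5] at h3
    have h6 := mul_le_mul_of_nonneg_left h2 hη.le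
    have h7 := mul_le_mul_of_nonneg_left h3 hη.le
    rw [h1]
    calc _ ≤ (‖e‖ + ‖e'‖) + (‖η • (gradient f x - gradient f z)‖
        + ‖η • (gradient f x' - gradient f z')‖) :=
          (norm_add_le _ _).trans (add_le_add (norm_sub_le _ _) (norm_sub_le _ _))
      _ ≤ _ := by
        rw [norm_smul, norm_smul, Real.norm_of_nonneg hη.le, hl]
        linarith
  have hdesc := aux_descent f hf L hlip x' x
  have hαr : α • r = d + η • G + ξ := by rw [hξ]; abel
  have hR : α * ‖r‖ ≤ (1 + l) * ‖d‖ + ‖ξ‖ := by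
    have : α * ‖r‖ = ‖α • r‖ := by rw [norm_smul, Real.norm_of_nonneg hα.le]
    rw [this, hαr]
    calc _ ≤ ‖d‖ + ‖η • G‖ + ‖ξ‖ := norm_add₃_le
      _ ≤ _ := by
        rw [norm_smul, Real.norm_of_nonneg hη.le]
        linarith
  have hin : -(‖ξ‖ * ((1 + l) * ‖d‖)) ≤ ⟪ξ, d - η • G⟫ := by
    have h1 := (abs_le.1 (abs_real_inner_le_norm ξ (d - η • G))).1
    have h2 : ‖d - η • G‖ ≤ (1 + l) * ‖d‖ := by
      refine (norm_sub_le _ _).trans ?_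
      rw [norm_smul, Real.norm_of_nonneg hη.le]
      linarith
    have := mul_le_mul_of_nonneg_left h2 (norm_nonneg ξ)
    linarith
  have hG2 : (η * ‖G‖) ^ 2 ≤ l ^ 2 * ‖d‖ ^ 2 := by
    rw [← mul_pow]; exact pow_le_pow_left₀ (by positivity) hGn 2
  have hexp : α * ⟪r, d - η • G⟫ = ‖d‖ ^ 2 - (η * ‖G‖) ^ 2 + ⟪ξ, d - η • G⟫ := by
    rw [← real_inner_smul_left, hαr, inner_add_left]
    congr 1
    rw [inner_add_left, inner_sub_right d d, inner_sub_right (η • G) d, real_inner_self_eq_norm_sq,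
      real_inner_self_eq_norm_sq, norm_smul, Real.norm_of_nonneg hη.le, real_inner_comm (η • G) d]
    ring
  have hsc := aux_scalar l α γ B (1 + l ^ 2) ‖d‖ ‖ξ‖ hl0 hα hγ hB rfl
    (by rw [hBdef, hl]; ring) (norm_nonneg _) (norm_nonneg _)
  have hR2 : α ^ 2 * ‖r‖ ^ 2 ≤ ((1 + l) * ‖d‖ + ‖ξ‖) ^ 2 := by
    rw [← mul_pow]; exact pow_le_pow_left₀ (by positivity) hR 2
  have hR3 := mul_le_mul_of_nonneg_left hR2
    (by positivity : 0 ≤ B / (2 * (1 + l ^ 2)))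
  have hξ2 : ‖ξ‖ ^ 2 ≤ 2 * (1 + l) ^ 2 * (‖e‖ ^ 2 + ‖e'‖ ^ 2) := by
    have := pow_le_pow_left₀ (norm_nonneg _) hξn 2
    have h2 : (‖e‖ + ‖e'‖) ^ 2 ≤ 2 * (‖e‖ ^ 2 + ‖e'‖ ^ 2) := by
      nlinarith [sq_nonneg (‖e‖ - ‖e'‖)]
    have h3 := mul_le_mul_of_nonneg_left h2 (sq_nonneg (1 + l))
    nlinarith
  have hξ3 := mul_le_mul_of_nonneg_left hξ2 (by positivity : 0 ≤ 2 / (γ * α))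
  -- combine into one inequality scaled by 2 α η
  have hfin : B / (2 * (1 + l ^ 2)) * (α ^ 2 * ‖r‖ ^ 2) ≤
      2 * (α * ⟪r, d - η • G⟫) - α * (l + 1) * ‖d‖ ^ 2
        + 2 / (γ * α) * (2 * (1 + l) ^ 2 * (‖e‖ ^ 2 + ‖e'‖ ^ 2)) := by
    rw [hexp]
    linarith
  have e1 : xb - x' = r - d := by rw [hr, hd]; abel
  have e2 : x - x' = -d := by rw [hd]; abel
  have e3 : gradient f x' = gradient f x + G := by rw [hG]; abel
  rw [e2, norm_neg, inner_neg_right] at hdesc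
  rw [e1, norm_sub_sq_real, inner_sub_right]
  have e4 : ⟪r, d - η • G⟫ = ⟪r, d⟫ - η * ⟪gradient f x', r⟫ + η * ⟪gradient f x, r⟫ := by
    rw [inner_sub_right, inner_smul_right, real_inner_comm G r, hG,
      inner_sub_left (gradient f x') (gradient f x) r]
    ring
  rw [e4] at hfin
  have hfin2 := mul_le_mul_of_nonneg_left hfin (by positivity : 0 ≤ 1 / (2 * α * η))
  have c1 : 1 / (2 * α * η) * (B / (2 * (1 + l ^ 2)) * (α ^ 2 * ‖r‖ ^ 2))
      = α * B / (4 * η * (1 + L ^ 2 * η ^ 2)) * ‖r‖ ^ 2 := by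
    rw [hl]; field_simp; ring
  have c2 : 1 / (2 * α * η) * (2 * (α * (⟪r, d⟫ - η * ⟪gradient f x', r⟫ + η * ⟪gradient f x, r⟫))
      - α * (l + 1) * ‖d‖ ^ 2 + 2 / (γ * α) * (2 * (1 + l) ^ 2 * (‖e‖ ^ 2 + ‖e'‖ ^ 2)))
      = 1 / η * ⟪r, d⟫ - ⟪gradient f x', r⟫ + ⟪gradient f x, r⟫ - (L / 2 + 1 / (2 * η)) * ‖d‖ ^ 2
        + 2 * (1 + η * L) ^ 2 / (γ * η * α ^ 2) * (‖e‖ ^ 2 + ‖e'‖ ^ 2) := by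
    rw [hl]; field_simp
    try ring
  rw [c1, c2] at hfin2
  have c3 : 1 / (2 * η) * (‖r‖ ^ 2 - 2 * ⟪r, d⟫ + ‖d‖ ^ 2)
    = 1 / (2 * η) * ‖r‖ ^ 2 - 1 / η * ⟪r, d⟫ + 1 / (2 * η) * ‖d‖ ^ 2 := by field_simp
  rw [c3]
  linarith

lemma aux_avg {n : ℕ} (hn : 0 < n) (f : Fin n → E → ℝ) (L : ℝ)
    (hL : 0 < L) (hlip : ∀ i u v, ‖gradient (f i) u - gradient (f i) v‖ ≤ L * ‖u - v‖)
    (g : E → ℝ) (hg : ConvexOn ℝ Set.univ g) (η : ℝ) (hη : 0 < η)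
    (y' z' x' e' : Fin n → E) (xb p : E)
    (hy' : ∀ i, y' i = z' i + η • gradient (f i) (z' i)) (hx' : ∀ i, x' i = z' i + e' i)
    (hp : IsMinOn (fun w => g w
      + (1 / (2 * η)) * ‖w - (n : ℝ)⁻¹ • ∑ i, ((2 : ℝ) • x' i - y' i)‖ ^ 2) Set.univ p) :
    g p + (n : ℝ)⁻¹ * ∑ i, (f i (x' i) + ⟪gradient (f i) (x' i), p - x' i⟫
        + (1 / (2 * η)) * ‖p - x' i‖ ^ 2)
      ≤ g xb + (n : ℝ)⁻¹ * ∑ i, (f i (x' i) + ⟪gradient (f i) (x' i), xb - x' i⟫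
        + (1 / (2 * η)) * ‖xb - x' i‖ ^ 2 + (1 + η ^ 2 * L ^ 2) / η * ‖e' i‖ ^ 2) := by
  have hn' : (0 : ℝ) < n := by exact_mod_cast hn
  set a := (n : ℝ)⁻¹ • ∑ i, ((2 : ℝ) • x' i - y' i) with ha
  have h1 := aux_strong g hg (1 / (2 * η)) (by positivity) a p xb hp
  -- the inner product with the average
  have h2 : ⟪a, xb - p⟫ = (n : ℝ)⁻¹ * ∑ i, ⟪(2 : ℝ) • x' i - y' i, xb - p⟫ := by
    rw [ha, real_inner_smul_left, sum_inner]
  have h3 : ‖p - a‖ ^ 2 = ‖p‖ ^ 2 - 2 * ⟪p, a⟫ + ‖a‖ ^ 2 := norm_sub_sq_real _ _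
  have h4 : ‖xb - a‖ ^ 2 = ‖xb‖ ^ 2 - 2 * ⟪xb, a⟫ + ‖a‖ ^ 2 := norm_sub_sq_real _ _
  have h5 : ⟪a, xb - p⟫ = ⟪xb, a⟫ - ⟪p, a⟫ := by
    rw [inner_sub_right, real_inner_comm, real_inner_comm p]
  -- per-agent comparison
  have h6 : ∀ i, (f i (x' i) + ⟪gradient (f i) (x' i), p - x' i⟫ + (1 / (2 * η)) * ‖p - x' i‖ ^ 2)
      ≤ (f i (x' i) + ⟪gradient (f i) (x' i), xb - x' i⟫
        + (1 / (2 * η)) * ‖xb - x' i‖ ^ 2 + (1 + η ^ 2 * L ^ 2) / η * ‖e' i‖ ^ 2)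
        + ((1 / η) * ⟪(2 : ℝ) • x' i - y' i, xb - p⟫ + (1 / (2 * η)) * (‖p‖ ^ 2 - ‖xb‖ ^ 2)
        + (1 / (2 * η)) * ‖xb - p‖ ^ 2) := by
    intro i
    set δ := e' i + η • (gradient (f i) (x' i) - gradient (f i) (z' i)) with hδ
    have k1 : (2 : ℝ) • x' i - y' i = x' i - η • gradient (f i) (x' i) + δ := by
      rw [hδ, hy', hx']; module
    have k2 : ‖δ‖ ≤ (1 + η * L) * ‖e' i‖ := by
      have m1 := hlip i (x' i) (z' i)
      have m2 : x' i - z' i = e' i := by rw [hx']; abel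
      rw [m2] at m1
      refine (norm_add_le _ _).trans ?_
      rw [norm_smul, Real.norm_of_nonneg hη.le]
      nlinarith [mul_le_mul_of_nonneg_left m1 hη.le]
    have k3 : ‖δ‖ ^ 2 ≤ 2 * (1 + η ^ 2 * L ^ 2) * ‖e' i‖ ^ 2 := by
      have := pow_le_pow_left₀ (norm_nonneg _) k2 2
      nlinarith [mul_nonneg (sq_nonneg (1 - η * L)) (sq_nonneg ‖e' i‖)]
    have k4 : 0 ≤ ‖δ + (xb - p)‖ ^ 2 := by positivity
    rw [norm_add_sq_real] at k4
    have k5 : 0 ≤ 2 * (1 + η ^ 2 * L ^ 2) * ‖e' i‖ ^ 2 + 2 * ⟪δ, xb - p⟫ + ‖xb - p‖ ^ 2 := by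
      linarith
    have k6 := mul_nonneg (by positivity : 0 ≤ 1 / (2 * η)) k5
    have k7 : 1 / (2 * η) * (2 * (1 + η ^ 2 * L ^ 2) * ‖e' i‖ ^ 2 + 2 * ⟪δ, xb - p⟫
        + ‖xb - p‖ ^ 2) = (1 + η ^ 2 * L ^ 2) / η * ‖e' i‖ ^ 2 + 1 / η * ⟪δ, xb - p⟫
        + 1 / (2 * η) * ‖xb - p‖ ^ 2 := by field_simp
    rw [k7] at k6
    rw [k1, inner_add_left, inner_sub_left, real_inner_smul_left, norm_sub_sq_real p,
      norm_sub_sq_real xb (x' i), inner_sub_right _ p, inner_sub_right _ xb (x' i),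
      inner_sub_right (x' i), inner_sub_right (gradient (f i) (x' i)) xb p,
      real_inner_comm (x' i) p, real_inner_comm (x' i) xb]
    have k8 : 1 / η * (⟪x' i, xb⟫ - ⟪x' i, p⟫
        - η * (⟪gradient (f i) (x' i), xb⟫ - ⟪gradient (f i) (x' i), p⟫) + ⟪δ, xb - p⟫)
        = 1 / η * ⟪x' i, xb⟫ - 1 / η * ⟪x' i, p⟫
        - (⟪gradient (f i) (x' i), xb⟫ - ⟪gradient (f i) (x' i), p⟫) + 1 / η * ⟪δ, xb - p⟫ := by
      field_simp
    rw [k8]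
    have k9 : 1 / η = 2 * (1 / (2 * η)) := by field_simp
    rw [k9] at k6 ⊢
    nlinarith
  have h7 := mul_le_mul_of_nonneg_left (Finset.sum_le_sum fun i (_ : i ∈ Finset.univ) => h6 i)
    (inv_nonneg.2 hn'.le)
  have h8 : (n : ℝ)⁻¹ * ∑ i, ((1 / η) * ⟪(2 : ℝ) • x' i - y' i, xb - p⟫
      + (1 / (2 * η)) * (‖p‖ ^ 2 - ‖xb‖ ^ 2) + (1 / (2 * η)) * ‖xb - p‖ ^ 2)
      = (1 / η) * ⟪a, xb - p⟫ + (1 / (2 * η)) * (‖p‖ ^ 2 - ‖xb‖ ^ 2)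
        + (1 / (2 * η)) * ‖xb - p‖ ^ 2 := by
    rw [h2, Finset.sum_add_distrib, Finset.sum_add_distrib, ← Finset.mul_sum]
    simp only [Finset.sum_const, Finset.card_univ, Fintype.card_fin, nsmul_eq_mul]
    field_simp
  rw [Finset.sum_add_distrib (f := fun i => f i (x' i) + ⟪gradient (f i) (x' i), xb - x' i⟫
        + (1 / (2 * η)) * ‖xb - x' i‖ ^ 2 + (1 + η ^ 2 * L ^ 2) / η * ‖e' i‖ ^ 2),
    mul_add, h8, h5] at h7
  rw [h3, h4] at h1
  have k9 : 1 / η = 2 * (1 / (2 * η)) := by field_simp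
  rw [k9] at h7
  nlinarith

end Helpers

lemma aux_Bpos (L α η γ : ℝ) (hL : 0 < L) (hα : 0 < α) (hη0 : 0 < η) (hγ : 0 < γ)
    (hη : η < (Real.sqrt ((4 - α) ^ 2 - 16 * α ^ 2 * γ * (1 + 4 * γ)) - α)
        / (4 * L * (1 + 2 * α * γ))) :
    0 < 2 - α * (L * η + 1) - 2 * L ^ 2 * η ^ 2 - 4 * γ * α * (1 + L ^ 2 * η ^ 2) := by
  rw [lt_div_iff₀ (by positivity)] at hη
  have h1 : η * (4 * L * (1 + 2 * α * γ)) + α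
      < Real.sqrt ((4 - α) ^ 2 - 16 * α ^ 2 * γ * (1 + 4 * γ)) := by linarith
  rw [Real.lt_sqrt (by positivity)] at h1
  have h2 : 0 < (8 * (1 + 2 * α * γ)) *
      (2 - α * (L * η + 1) - 2 * L ^ 2 * η ^ 2 - 4 * γ * α * (1 + L ^ 2 * η ^ 2)) := by
    nlinarith
  exact pos_of_mul_pos_right h2 (by positivity)

/-- **One-step expected descent for FedDR (Lemma A.6).**
With the stepsize conditions on `α, η`, a random active set `S` with marginals
`P(i ∈ S) = pᵢ ≥ p̂ > 0`, and one inexact randomized FedDR step from the state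
`(yᵢ, zᵢ, xᵢ, eᵢ)ᵢ, x̄`, the Lyapunov function
`V_η(x̄; x) := g(x̄) + (1/n)Σᵢ[fᵢ(xᵢ) + ⟨∇fᵢ(xᵢ), x̄ − xᵢ⟩ + (1/(2η))‖x̄ − xᵢ‖²]` satisfies
`(β/(2n)) Σᵢ‖x̄ − xᵢ‖² ≤ V_η(x̄; x) − E[V_η(x̄'; x')] + (1/n)Σᵢ(ρ₁εᵢ² + ρ₂(ε'ᵢ)²)`. -/
theorem feddr_one_step_expected_descent {pdim n : ℕ} (hn : 0 < n)
    (f : Fin n → EuclideanSpace ℝ (Fin pdim) → ℝ) (L : ℝ) (hL : 0 < L)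
    (hdiff : ∀ i, Differentiable ℝ (f i))
    (hlip : ∀ i u v, ‖gradient (f i) u - gradient (f i) v‖ ≤ L * ‖u - v‖)
    (g : EuclideanSpace ℝ (Fin pdim) → ℝ)
    (hgconv : ConvexOn ℝ Set.univ g) (hglsc : LowerSemicontinuous g)
    (γ₁ γ₄ : ℝ) (hγ₁ : 0 < γ₁) (hγ₄ : 0 < γ₄)
    (α η : ℝ) (hα0 : 0 < α)
    (hα : α < min 8 (Real.sqrt (17 + 64 * γ₄) - 1) / (4 * (1 + 4 * γ₄)))
    (hη0 : 0 < η)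
    (hη : η < (Real.sqrt ((4 - α) ^ 2 - 16 * α ^ 2 * γ₄ * (1 + 4 * γ₄)) - α)
        / (4 * L * (1 + 2 * α * γ₄)))
    (proxg : EuclideanSpace ℝ (Fin pdim) → EuclideanSpace ℝ (Fin pdim))
    (hproxg : ∀ u, IsMinOn (fun w => g w + (1 / (2 * η)) * ‖w - u‖ ^ 2) Set.univ (proxg u))
    (hproxg_unique : ∀ u w,
      IsMinOn (fun w' => g w' + (1 / (2 * η)) * ‖w' - u‖ ^ 2) Set.univ w → w = proxg u)
    {Ω : Type*} [MeasurableSpace Ω] (μ : Measure Ω) [IsProbabilityMeasure μ]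
    (S : Ω → Finset (Fin n))
    (hSmeas : ∀ i, MeasurableSet {ω | i ∈ S ω})
    (prob : Fin n → ℝ) (phat : ℝ) (hphat0 : 0 < phat)
    (hmarg : ∀ i, μ {ω | i ∈ S ω} = ENNReal.ofReal (prob i))
    (hphat : ∀ i, phat ≤ prob i)
    (y z x e : Fin n → EuclideanSpace ℝ (Fin pdim))
    (ε ε' : Fin n → ℝ)
    (xbar : EuclideanSpace ℝ (Fin pdim))
    (hy : ∀ i, y i = z i + η • gradient (f i) (z i))
    (hx : ∀ i, x i = z i + e i)
    (he : ∀ i, ‖e i‖ ≤ ε i)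
    (y' z' x' e' : Fin n → Ω → EuclideanSpace ℝ (Fin pdim))
    (xbar' : Ω → EuclideanSpace ℝ (Fin pdim))
    (hstep : ∀ᵐ ω ∂μ,
      (∀ i ∈ S ω,
        y' i ω = y i + α • (xbar - x i) ∧
        IsMinOn (fun u => f i u + (1 / (2 * η)) * ‖u - y' i ω‖ ^ 2) Set.univ (z' i ω) ∧
        x' i ω = z' i ω + e' i ω ∧ ‖e' i ω‖ ≤ ε' i) ∧
      (∀ i ∉ S ω,
        y' i ω = y i ∧ z' i ω = z i ∧ x' i ω = x i ∧ e' i ω = e i ∧ ‖e i‖ ≤ ε' i) ∧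
      xbar' ω = proxg ((n : ℝ)⁻¹ • ∑ i, ((2 : ℝ) • x' i ω - y' i ω)))
    (Vnext : Ω → ℝ)
    (hVnext : ∀ ω, Vnext ω = g (xbar' ω) + (n : ℝ)⁻¹ * ∑ i,
      (f i (x' i ω) + ⟪gradient (f i) (x' i ω), xbar' ω - x' i ω⟫
        + (1 / (2 * η)) * ‖xbar' ω - x' i ω‖ ^ 2))
    (hVint : Integrable Vnext μ)
    (β ρ₁ ρ₂ : ℝ)
    (hβ : β = phat * α * (2 - α * (L * η + 1) - 2 * L ^ 2 * η ^ 2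
        - 4 * γ₄ * α * (1 + L ^ 2 * η ^ 2)) / (2 * η * (1 + γ₁) * (1 + L ^ 2 * η ^ 2)))
    (hρ₂ : ρ₂ = 2 * (1 + η * L) ^ 2 / (γ₄ * η * α ^ 2) + (1 + η ^ 2 * L ^ 2) / η
        + α * (2 - α * (L * η + 1) - 2 * L ^ 2 * η ^ 2 - 4 * α * γ₄ * (1 + L ^ 2 * η ^ 2))
          / (2 * η * (1 + L ^ 2 * η ^ 2) * γ₁))
    (hρ₁ : ρ₁ = ρ₂ + (1 + η ^ 2 * L ^ 2) / η) :
    (β / (2 * n)) * ∑ i, ‖xbar - x i‖ ^ 2 ≤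
      (g xbar + (n : ℝ)⁻¹ * ∑ i,
          (f i (x i) + ⟪gradient (f i) (x i), xbar - x i⟫
            + (1 / (2 * η)) * ‖xbar - x i‖ ^ 2))
        - (∫ ω, Vnext ω ∂μ)
        + (n : ℝ)⁻¹ * ∑ i, (ρ₁ * ε i ^ 2 + ρ₂ * ε' i ^ 2) := by
  have hn' : (0 : ℝ) < n := by exact_mod_cast hn
  have hBpos := aux_Bpos L α η γ₄ hL hα0 hη0 hγ₄ hη
  set B := 2 - α * (L * η + 1) - 2 * L ^ 2 * η ^ 2 - 4 * γ₄ * α * (1 + L ^ 2 * η ^ 2) with hB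
  have hB' : 2 - α * (L * η + 1) - 2 * L ^ 2 * η ^ 2 - 4 * α * γ₄ * (1 + L ^ 2 * η ^ 2) = B := by
    rw [hB]; ring
  rw [hB'] at hρ₂
  set c := α * B / (4 * η * (1 + γ₁) * (1 + L ^ 2 * η ^ 2)) with hc
  have hc0 : 0 < c := by positivity
  have hcc : c ≤ α * B / (4 * η * (1 + L ^ 2 * η ^ 2)) := by
    rw [hc]
    apply div_le_div_of_nonneg_left (by positivity) (by positivity)
    have : 0 ≤ 4 * η * (1 + L ^ 2 * η ^ 2) * γ₁ := by positivity
    nlinarith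
  have hβc : β / 2 = phat * c := by rw [hβ, hc]; field_simp; norm_num
  set K := 2 * (1 + η * L) ^ 2 / (γ₄ * η * α ^ 2) with hK
  set q := (1 + η ^ 2 * L ^ 2) / η with hq
  have hK0 : 0 ≤ K := by positivity
  have hq0 : 0 ≤ q := by positivity
  have hr2 : K + q ≤ ρ₂ := by
    have : 0 ≤ α * B / (2 * η * (1 + L ^ 2 * η ^ 2) * γ₁) := by positivity
    linarith
  have hr1 : K ≤ ρ₁ := by linarith
  have hε0 : ∀ i, ‖e i‖ ^ 2 ≤ ε i ^ 2 := fun i => pow_le_pow_left₀ (norm_nonneg _) (he i) 2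
  set W : Fin n → ℝ := fun i => f i (x i) + ⟪gradient (f i) (x i), xbar - x i⟫
            + (1 / (2 * η)) * ‖xbar - x i‖ ^ 2 with hW
  let ind : Fin n → Ω → ℝ := fun i => Set.indicator {ω | i ∈ S ω} (fun _ => (1 : ℝ))
  let U : Ω → ℝ := fun ω => g xbar + (n : ℝ)⁻¹ * ∑ i,
    ((W i + (ρ₁ * ε i ^ 2 + ρ₂ * ε' i ^ 2)) - c * ‖xbar - x i‖ ^ 2 * ind i ω)
  have hle : Vnext ≤ᵐ[μ] U := by
    filter_upwards [hstep] with ω hω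
    obtain ⟨hS, hnS, hxb⟩ := hω
    have hy' : ∀ i, y' i ω = z' i ω + η • gradient (f i) (z' i ω) := by
      intro i
      by_cases hi : i ∈ S ω
      · exact aux_prox (f i) (hdiff i) η hη0 _ _ (hS i hi).2.1
      · obtain ⟨h1, h2, -⟩ := hnS i hi
        rw [h1, h2, hy]
    have hx' : ∀ i, x' i ω = z' i ω + e' i ω := by
      intro i
      by_cases hi : i ∈ S ω
      · exact (hS i hi).2.2.1
      · obtain ⟨h1, h2, h3, h4, -⟩ := hnS i hi
        rw [h2, h3, h4, hx]
    have he' : ∀ i, ‖e' i ω‖ ^ 2 ≤ ε' i ^ 2 := by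
      intro i
      refine pow_le_pow_left₀ (norm_nonneg _) ?_ 2
      by_cases hi : i ∈ S ω
      · exact (hS i hi).2.2.2
      · obtain ⟨h1, h2, h3, h4, h5⟩ := hnS i hi
        rw [h4]; exact h5
    have hmin := hproxg ((n : ℝ)⁻¹ • ∑ i, ((2 : ℝ) • x' i ω - y' i ω))
    rw [← hxb] at hmin
    have hav := aux_avg hn f L hL hlip g hgconv η hη0 (fun i => y' i ω) (fun i => z' i ω)
      (fun i => x' i ω) (fun i => e' i ω) xbar (xbar' ω) hy' hx' hmin
    rw [hVnext]
    refine hav.trans ?_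
    simp only [U]
    gcongr with i
    have t1 := mul_le_mul_of_nonneg_left (he' i) hq0
    have t2 := mul_le_mul_of_nonneg_left (he' i) hK0
    have t3 := mul_le_mul_of_nonneg_left (hε0 i) hK0
    have t4 := mul_le_mul_of_nonneg_right hr2 (sq_nonneg (ε' i))
    have t5 := mul_le_mul_of_nonneg_right hr1 (sq_nonneg (ε i))
    by_cases hi : i ∈ S ω
    · have hind : ind i ω = 1 := by simp [ind, hi]
      have hag := aux_agent (f i) (hdiff i) L hL (hlip i) α η γ₄ B hα0 hη0 hγ₄ hBpos hB xbar
        (y i) (z i) (x i) (e i) (y' i ω) (z' i ω) (x' i ω) (e' i ω) (hy i) (hx i) (hy' i) (hx' i)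
        (hS i hi).1
      have t6 := mul_le_mul_of_nonneg_right hcc (sq_nonneg ‖xbar - x i‖)
      rw [hind]
      simp only [hW]
      linarith
    · have hind : ind i ω = 0 := by simp [ind, hi]
      rw [hind, (hnS i hi).2.2.1]
      have t7 := mul_nonneg hK0 (sq_nonneg (ε' i))
      have t8 := mul_nonneg hK0 (sq_nonneg (ε i))
      simp only [hW]
      linarith
  have hindint : ∀ i, Integrable (ind i) μ := fun i =>
    (integrable_const (1 : ℝ)).indicator (hSmeas i)
  have hindval : ∀ i, ∫ ω, ind i ω ∂μ = prob i := by
    intro i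
    have : 0 ≤ prob i := hphat0.le.trans (hphat i)
    simp only [ind]
    rw [integral_indicator (hSmeas i), setIntegral_const, smul_eq_mul, mul_one, measureReal_def,
      hmarg, ENNReal.toReal_ofReal this]
  have hti : ∀ i, Integrable (fun ω => (W i + (ρ₁ * ε i ^ 2 + ρ₂ * ε' i ^ 2))
      - c * ‖xbar - x i‖ ^ 2 * ind i ω) μ := fun i =>
    (integrable_const _).sub ((hindint i).const_mul _)
  have hsi : Integrable (fun ω => (n : ℝ)⁻¹ * ∑ i, ((W i + (ρ₁ * ε i ^ 2 + ρ₂ * ε' i ^ 2))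
      - c * ‖xbar - x i‖ ^ 2 * ind i ω)) μ :=
    (integrable_finsetSum _ fun i _ => hti i).const_mul _
  have hUi : Integrable U μ := (integrable_const _).add hsi
  have hUval : ∫ ω, U ω ∂μ = g xbar + (n : ℝ)⁻¹ * ∑ i,
      ((W i + (ρ₁ * ε i ^ 2 + ρ₂ * ε' i ^ 2)) - c * ‖xbar - x i‖ ^ 2 * prob i) := by
    simp only [U]
    rw [integral_add (integrable_const _) hsi, integral_const_mul,
      integral_finsetSum _ fun i _ => hti i]
    simp only [integral_const, probReal_univ, one_smul]
    congr 2
    refine Finset.sum_congr rfl fun i _ => ?_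
    rw [integral_sub (integrable_const _) ((hindint i).const_mul _), integral_const_mul, hindval]
    simp
  have hmono := integral_mono_ae hVint hUi hle
  rw [hUval, Finset.sum_sub_distrib, Finset.sum_add_distrib] at hmono
  have hp : phat * c * ∑ i, ‖xbar - x i‖ ^ 2 ≤ ∑ i, c * ‖xbar - x i‖ ^ 2 * prob i := by
    rw [Finset.mul_sum]
    refine Finset.sum_le_sum fun i _ => ?_
    have := mul_le_mul_of_nonneg_left (hphat i)
      (by positivity : 0 ≤ c * ‖xbar - x i‖ ^ 2)
    linarith
  have hp2 := mul_le_mul_of_nonneg_left hp (inv_nonneg.2 hn'.le)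
  have hL0 : β / (2 * n) * ∑ i, ‖xbar - x i‖ ^ 2
      = (n : ℝ)⁻¹ * (phat * c * ∑ i, ‖xbar - x i‖ ^ 2) := by
    rw [← hβc]; field_simp
  rw [hL0]
  linarith
end

section
/- Sure descent for one inexact FedDR step (Lemma A.5). Let S ⊆ {1,…,n} be arbitrary and let α, η, γ₃, γ₄ > 0. Suppose (y_i, z_i, x_i, e_i)_{i=1}^n and x̄ ∈ dom g satisfy y_i = z_i + η∇f_i(z_i) and x_i = z_i + e_i for all i, and define the next state: for i ∈ S, y'_i = y_i + α(x̄ − x_i), z'_i = prox_{ηf_i}(y'_i), x'_i = z'_i + e'_i; for i ∉ S, (y'_i, z'_i, x'_i, e'_i) = (y_i, z_i, x_i, e_i); and x̄' = prox_{ηg}((1/n)Σ_{i=1}^n (2x'_i − y'_i)). Then, with E² := (1/n)Σ_{i=1}^n ‖e'_i‖²: V_η(x̄'; x'₁,…,x'ₙ) ≤ V_η(x̄; x₁,…,xₙ) − ([2 − α(Lη+1) − 2L²η² − 4αγ₄(1+L²η²)]/(2αηn)) Σ_{i∈S} ‖x'_i − x_i‖² − ((1−γ₃)/(2η)) ‖x̄'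 − x̄‖² + ((1+η²L²)/(ηγ₃)) E² + (2(1+ηL)²/(γ₄ηα²n)) Σ_{i∈S} (‖e_i‖² + ‖e'_i‖²). -/
open scoped RealInnerProductSpace

section FedDRHelpers

variable {E : Type*} [NormedAddCommGroup E] [InnerProductSpace ℝ E]

/-- Lower quadratic bound for a function with Lipschitz gradient. -/
lemma feddr_descent_aux [CompleteSpace E] (f : E → ℝ) (L : ℝ) (hdiff : Differentiable ℝ f)
    (hlip : ∀ u v, ‖gradient f u - gradient f v‖ ≤ L * ‖u - v‖) (a b : E) :
    f a + ⟪gradient f a, b - a⟫ - L / 2 * ‖b - a‖ ^ 2 ≤ f b := by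
  set d := b - a with hd
  have hline : ∀ t : ℝ, HasDerivAt (fun t : ℝ => a + t • d) d t := by
    intro t
    simpa using ((hasDerivAt_id t).smul_const d).const_add a
  have hder : ∀ t : ℝ, HasDerivAt
      (fun t : ℝ => f (a + t • d) - t * ⟪gradient f a, d⟫ + L / 2 * ‖d‖ ^ 2 * t ^ 2)
      (⟪gradient f (a + t • d), d⟫ - 1 * ⟪gradient f a, d⟫
        + L / 2 * ‖d‖ ^ 2 * (2 * t)) t := by
    intro t
    have h1 := ((hdiff (a + t • d)).hasGradientAt.hasFDerivAt).comp_hasDerivAt t (hline t)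
    have h2 := (hasDerivAt_id t).mul_const ⟪gradient f a, d⟫
    have h3 := (hasDerivAt_pow 2 t).const_mul (L / 2 * ‖d‖ ^ 2)
    have h4 := (h1.sub h2).add h3
    have h5 : ⟪gradient f (a + t • d), d⟫ - 1 * ⟪gradient f a, d⟫ + L / 2 * ‖d‖ ^ 2 * (2 * t)
        = (InnerProductSpace.toDual ℝ E (gradient f (a + t • d))) d - 1 * ⟪gradient f a, d⟫
          + L / 2 * ‖d‖ ^ 2 * (((2 : ℕ) : ℝ) * t ^ (2 - 1)) := by
      rw [InnerProductSpace.toDual_apply_apply]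
      norm_num
    rw [h5]
    exact h4
  have hmono : MonotoneOn
      (fun t : ℝ => f (a + t • d) - t * ⟪gradient f a, d⟫ + L / 2 * ‖d‖ ^ 2 * t ^ 2)
      (Set.Icc 0 1) := by
    apply monotoneOn_of_deriv_nonneg (convex_Icc 0 1)
    · exact fun t _ => (hder t).continuousAt.continuousWithinAt
    · exact fun t _ => (hder t).differentiableAt.differentiableWithinAt
    · intro t ht
      rw [interior_Icc] at ht
      rw [(hder t).deriv]
      have h1 := abs_real_inner_le_norm (gradient f (a + t • d) - gradient f a) d
      have h2 := hlip (a + t • d) a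
      rw [add_sub_cancel_left, norm_smul, Real.norm_eq_abs, abs_of_pos ht.1] at h2
      have h3 := mul_le_mul_of_nonneg_right h2 (norm_nonneg d)
      rw [inner_sub_left] at h1
      have h4 := (abs_le.1 h1).1
      nlinarith
  have h := hmono (Set.left_mem_Icc.2 zero_le_one) (Set.right_mem_Icc.2 zero_le_one) zero_le_one
  simp only [zero_smul, add_zero, one_smul, zero_mul, sub_zero, one_mul, one_pow, mul_one] at h
  have hb : a + d = b := by rw [hd]; abel
  rw [hb] at h
  nlinarith

/-- First-order optimality for the prox of a smooth function. -/
lemma feddr_prox_smooth_aux [CompleteSpace E] (f : E → ℝ) (η : ℝ) (hη : 0 < η)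
    (hdiff : Differentiable ℝ f) (y z : E)
    (h : IsMinOn (fun u => f u + (1 / (2 * η)) * ‖u - y‖ ^ 2) Set.univ z) :
    y = z + η • gradient f z := by
  have hloc : IsLocalMin (fun u => f u + (1 / (2 * η)) * ‖u - y‖ ^ 2) z :=
    h.isLocalMin Filter.univ_mem
  have h1 := (hdiff z).hasGradientAt.hasFDerivAt
  have h2 := ((((hasFDerivAt_id z).sub_const y).norm_sq).const_mul (1 / (2 * η)))
  have h3 := hloc.hasFDerivAt_eq_zero (h1.add h2)
  have h4 : ∀ v, ⟪gradient f z + (1 / η) • (z - y), v⟫ = 0 := by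
    intro v
    have h5 := congrArg (fun T => T v) h3
    have h6 : ⟪gradient f z, v⟫ + 1 / (2 * η) * (2 * ⟪z - y, v⟫) = 0 := by
      rw [← InnerProductSpace.toDual_apply_apply (𝕜 := ℝ)]
      simpa only [ContinuousLinearMap.add_apply, ContinuousLinearMap.smul_apply, two_smul, two_mul,
        ContinuousLinearMap.comp_apply, innerSL_apply_apply, smul_eq_mul, id,
        ContinuousLinearMap.id_apply, ContinuousLinearMap.zero_apply] using h5
    rw [inner_add_left, real_inner_smul_left, ← h6]
    ring
  have h5 := inner_self_eq_zero.1 (h4 _)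
  have h6 : η • (gradient f z + (1 / η) • (z - y)) = 0 := by rw [h5, smul_zero]
  rw [smul_add, smul_smul, mul_one_div_cancel hη.ne', one_smul] at h6
  have : z + η • gradient f z - y = 0 := by rw [← h6]; abel
  exact (sub_eq_zero.1 this).symm

/-- Variational inequality for the prox of a convex function. -/
lemma feddr_prox_convex_aux (g : E → ℝ) (hg : ConvexOn ℝ Set.univ g) (η : ℝ)
    (w p q : E)
    (h : IsMinOn (fun u => g u + (1 / (2 * η)) * ‖u - w‖ ^ 2) Set.univ p) :
    g p - g q ≤ 1 / η * ⟪p - w, q - p⟫ := by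
  have key : ∀ t : ℝ, 0 < t → t ≤ 1 →
      g p - g q - 1 / η * ⟪p - w, q - p⟫ ≤ t * (1 / (2 * η) * ‖q - p‖ ^ 2) := by
    intro t ht ht1
    have h1 := h (Set.mem_univ ((1 - t) • p + t • q))
    have h2 := hg.2 (Set.mem_univ p) (Set.mem_univ q) (sub_nonneg.2 ht1) ht.le (by ring)
    have h3 : (1 - t) • p + t • q - w = (p - w) + t • (q - p) := by
      module
    simp only [Set.mem_ofPred_eq, smul_eq_mul] at h1 h2
    rw [h3, norm_add_sq_real, norm_smul, real_inner_smul_right, mul_pow, Real.norm_eq_abs,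
      sq_abs] at h1
    have h4 : 1 / η = 2 * (1 / (2 * η)) := by ring
    rw [h4]
    have : t * (g p - g q - 2 * (1 / (2 * η)) * ⟪p - w, q - p⟫)
        ≤ t * (t * (1 / (2 * η) * ‖q - p‖ ^ 2)) := by
      linarith
    exact le_of_mul_le_mul_left this ht
  have hlim : Filter.Tendsto (fun t : ℝ => t * (1 / (2 * η) * ‖q - p‖ ^ 2))
      (nhdsWithin 0 (Set.Ioi 0)) (nhds 0) := by
    have : Continuous (fun t : ℝ => t * (1 / (2 * η) * ‖q - p‖ ^ 2)) := by fun_prop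
    have h := this.tendsto 0
    rw [zero_mul] at h
    exact h.mono_left nhdsWithin_le_nhds
  have := ge_of_tendsto hlim (b := g p - g q - 1 / η * ⟪p - w, q - p⟫) (by
    filter_upwards [Ioc_mem_nhdsGT (zero_lt_one (α := ℝ))] with t ht
    exact key t ht.1 ht.2)
  linarith

/-- Young's inequality. -/
lemma feddr_young_aux (c : ℝ) (hc : 0 < c) (u v : E) :
    2 * ⟪u, v⟫ ≤ c * ‖u‖ ^ 2 + 1 / c * ‖v‖ ^ 2 := by
  have h := sq_nonneg ‖c • u - v‖
  rw [norm_sub_sq_real, norm_smul, real_inner_smul_left, Real.norm_eq_abs, abs_of_pos hc] at h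
  have h2 : c * ‖u‖ ^ 2 + 1 / c * ‖v‖ ^ 2 - 2 * ⟪u, v⟫
      = 1 / c * ((c * ‖u‖) ^ 2 - 2 * (c * ⟪u, v⟫) + ‖v‖ ^ 2) := by
    field_simp
    ring
  have h3 := mul_nonneg (one_div_pos.2 hc).le h
  linarith

lemma feddr_norm_add_sq_aux (u v : E) : ‖u + v‖ ^ 2 ≤ 2 * (‖u‖ ^ 2 + ‖v‖ ^ 2) := by
  have h := feddr_young_aux 1 one_pos u v
  rw [norm_add_sq_real]
  linarith

/-- Per-user estimate for the `x̄` step; `Gx, Gz` are gradients at `x, z`. -/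
lemma feddr_xbar_step_aux (L η γ : ℝ) (hη : 0 < η) (hγ : 0 < γ)
    (y z x e Gx Gz p q : E) (hy : y = z + η • Gz) (hx : x = z + e)
    (hG : ‖Gx - Gz‖ ≤ L * ‖x - z‖) :
    ⟪Gx, p - x⟫ + 1 / (2 * η) * ‖p - x‖ ^ 2 + 1 / η * ⟪p - ((2 : ℝ) • x - y), q - p⟫
      ≤ ⟪Gx, q - x⟫ + 1 / (2 * η) * ‖q - x‖ ^ 2 - (1 - γ) / (2 * η) * ‖p - q‖ ^ 2
        + (1 + η ^ 2 * L ^ 2) / (η * γ) * ‖e‖ ^ 2 := by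
  set d := e + η • (Gx - Gz) with hd
  have hw : (2 : ℝ) • x - y = x - η • Gx + d := by
    rw [hd, hy, hx]; module
  have hxz : x - z = e := by rw [hx]; abel
  rw [hxz] at hG
  have hdn : ‖d‖ ^ 2 ≤ 2 * ((1 + η ^ 2 * L ^ 2) * ‖e‖ ^ 2) := by
    have h1 := feddr_norm_add_sq_aux e (η • (Gx - Gz))
    rw [← hd, norm_smul, Real.norm_eq_abs, abs_of_pos hη, mul_pow] at h1
    have h2 : ‖Gx - Gz‖ ^ 2 ≤ (L * ‖e‖) ^ 2 := pow_le_pow_left₀ (norm_nonneg _) hG 2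
    have h3 := mul_le_mul_of_nonneg_left h2 (sq_nonneg η)
    nlinarith
  have hyoung := feddr_young_aux γ hγ (p - q) d
  have hqx : q - x = (q - p) + (p - x) := by abel
  have hpq : p - q = -(q - p) := by abel
  have hpw : p - (x - η • Gx + d) = (p - x) + η • Gx - d := by abel
  rw [hpq, norm_neg, inner_neg_left] at hyoung
  rw [hw, hpw, hqx, hpq, norm_neg, norm_add_sq_real (q - p) (p - x), inner_add_right, inner_sub_left,
    inner_add_left, real_inner_smul_left, real_inner_comm (q - p) (p - x), real_inner_comm (q - p) d]
  have hc : 0 < 1 / (2 * η) := by positivity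
  have h1 := mul_le_mul_of_nonneg_left hyoung hc.le
  have h2 := mul_le_mul_of_nonneg_left hdn (show 0 ≤ 1 / (2 * η) * (1 / γ) by positivity)
  have e1 : (1 - γ) / (2 * η) * ‖q - p‖ ^ 2
      = 1 / (2 * η) * ‖q - p‖ ^ 2 - 1 / (2 * η) * (γ * ‖q - p‖ ^ 2) := by ring
  have e2 : (1 + η ^ 2 * L ^ 2) / (η * γ) * ‖e‖ ^ 2
      = 1 / (2 * η) * (1 / γ) * (2 * ((1 + η ^ 2 * L ^ 2) * ‖e‖ ^ 2)) := by
    field_simp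
  have e3 : ∀ A B C : ℝ, 1 / η * (A + η * B - C) = 2 * (1 / (2 * η)) * (A - C) + B := by
    intro A B C
    field_simp
    ring
  rw [e1, e2, e3]
  linarith

/-- Per-user estimate for the local step. -/
lemma feddr_local_step_aux (L α η γ : ℝ) (hL : 0 < L) (hα : 0 < α) (hη : 0 < η) (hγ : 0 < γ)
    (y z x e Gx Gz y' z' x' e' Gx' Gz' q : E) (F F' : ℝ)
    (hy : y = z + η • Gz) (hx : x = z + e) (hy' : y' = z' + η • Gz') (hx' : x' = z' + e')
    (hupd : y' = y + α • (q - x))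
    (hG : ‖Gx - Gz‖ ≤ L * ‖x - z‖) (hG' : ‖Gx' - Gz'‖ ≤ L * ‖x' - z'‖)
    (hGG : ‖Gx' - Gx‖ ≤ L * ‖x' - x‖)
    (hF : F' + ⟪Gx', x - x'⟫ - L / 2 * ‖x - x'‖ ^ 2 ≤ F) :
    F' + ⟪Gx', q - x'⟫ + 1 / (2 * η) * ‖q - x'‖ ^ 2
      ≤ F + ⟪Gx, q - x⟫ + 1 / (2 * η) * ‖q - x‖ ^ 2
        - (2 - α * (L * η + 1) - 2 * L ^ 2 * η ^ 2 - 4 * α * γ * (1 + L ^ 2 * η ^ 2))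
            / (2 * α * η) * ‖x' - x‖ ^ 2
        + 2 * (1 + η * L) ^ 2 / (γ * η * α ^ 2) * (‖e‖ ^ 2 + ‖e'‖ ^ 2) := by
  have hxz : x - z = e := by rw [hx]; abel
  have hxz' : x' - z' = e' := by rw [hx']; abel
  rw [hxz] at hG
  rw [hxz'] at hG'
  set D := x' - x with hD
  set G := Gx' - Gx with hGdef
  set r := (e - e') + η • ((Gx - Gz) - (Gx' - Gz')) with hr
  have hkey : α • (q - x) = D + η • G + r := by
    have : α • (q - x) = y' - y := by rw [hupd]; abel
    rw [this, hy, hy', hr, hD, hGdef, hx, hx']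
    module
  have hrn : ‖r‖ ≤ (1 + η * L) * (‖e‖ + ‖e'‖) := by
    have h1 := norm_add_le (e - e') (η • ((Gx - Gz) - (Gx' - Gz')))
    rw [← hr, norm_smul, Real.norm_eq_abs, abs_of_pos hη] at h1
    have h2 := norm_sub_le e e'
    have h3 := norm_sub_le (Gx - Gz) (Gx' - Gz')
    have h4 := mul_le_mul_of_nonneg_left (h3.trans (add_le_add hG hG')) hη.le
    linarith
  have hrn2 : ‖r‖ ^ 2 ≤ 2 * (1 + η * L) ^ 2 * (‖e‖ ^ 2 + ‖e'‖ ^ 2) := by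
    have h1 := pow_le_pow_left₀ (norm_nonneg _) hrn 2
    have h2 := mul_nonneg (sq_nonneg (1 + η * L)) (sq_nonneg (‖e‖ - ‖e'‖))
    nlinarith
  have hGG2 : η ^ 2 * ‖G‖ ^ 2 ≤ L ^ 2 * η ^ 2 * ‖D‖ ^ 2 := by
    have h1 := pow_le_pow_left₀ (norm_nonneg _) hGG 2
    have h2 := mul_le_mul_of_nonneg_left h1 (sq_nonneg η)
    linarith
  have hQ : ‖η • G - D‖ ^ 2 ≤ 2 * ((1 + L ^ 2 * η ^ 2) * ‖D‖ ^ 2) := by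
    have h1 := feddr_norm_add_sq_aux (η • G) (-D)
    rw [← sub_eq_add_neg, norm_neg, norm_smul, Real.norm_eq_abs, abs_of_pos hη, mul_pow] at h1
    linarith
  -- the main inner product
  have hI : α * ⟪q - x, η • G - D⟫ = η ^ 2 * ‖G‖ ^ 2 - ‖D‖ ^ 2 + ⟪η • G - D, r⟫ := by
    rw [← real_inner_smul_left, hkey, inner_add_left, real_inner_comm (η • G - D) r]
    congr 1
    rw [inner_sub_right, inner_add_left, inner_add_left, real_inner_self_eq_norm_sq,
      real_inner_self_eq_norm_sq, norm_smul, Real.norm_eq_abs, abs_of_pos hη,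
      real_inner_comm D (η • G)]
    ring
  have hyoung := feddr_young_aux (2 * α * γ) (by positivity) (η • G - D) r
  have e1 : ⟪Gx', q - x'⟫ = ⟪G, q - x⟫ + ⟪Gx, q - x⟫ + ⟪Gx', x - x'⟫ := by
    rw [hGdef, inner_sub_left]
    have : q - x' = (q - x) + (x - x') := by abel
    rw [this, inner_add_right]
    ring
  have e2 : ‖q - x'‖ ^ 2 = ‖q - x‖ ^ 2 - 2 * ⟪q - x, D⟫ + ‖D‖ ^ 2 := by
    rw [← norm_sub_sq_real, hD]
    congr 2
    abel
  have e3 : ⟪q - x, η • G - D⟫ = η * ⟪G, q - x⟫ - ⟪q - x, D⟫ := by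
    rw [inner_sub_right, real_inner_smul_right, real_inner_comm]
  have e4 : ‖x - x'‖ = ‖D‖ := by rw [hD, norm_sub_rev]
  rw [e4] at hF
  rw [e1, e2]
  rw [e3] at hI
  have hyoung2 : ⟪η • G - D, r⟫ ≤ 2 * α * γ * ((1 + L ^ 2 * η ^ 2) * ‖D‖ ^ 2)
      + 1 / (α * γ) * ((1 + η * L) ^ 2 * (‖e‖ ^ 2 + ‖e'‖ ^ 2)) := by
    have h1 := mul_le_mul_of_nonneg_left hQ (show 0 ≤ 2 * α * γ by positivity)
    have h2 := mul_le_mul_of_nonneg_left hrn2 (show 0 ≤ 1 / (2 * α * γ) by positivity)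
    have h3 : 1 / (2 * α * γ) * (2 * (1 + η * L) ^ 2 * (‖e‖ ^ 2 + ‖e'‖ ^ 2))
        = 1 / (α * γ) * ((1 + η * L) ^ 2 * (‖e‖ ^ 2 + ‖e'‖ ^ 2)) := by
      field_simp
    have h4 : 0 ≤ 1 / (α * γ) * ((1 + η * L) ^ 2 * (‖e‖ ^ 2 + ‖e'‖ ^ 2)) := by positivity
    linarith
  have hfin : α * (η * ⟪G, q - x⟫ - ⟪q - x, D⟫) ≤ L ^ 2 * η ^ 2 * ‖D‖ ^ 2 - ‖D‖ ^ 2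
      + 2 * α * γ * ((1 + L ^ 2 * η ^ 2) * ‖D‖ ^ 2)
      + 1 / (α * γ) * (2 * (1 + η * L) ^ 2 * (‖e‖ ^ 2 + ‖e'‖ ^ 2)) := by
    have h4 : 0 ≤ 1 / (α * γ) * ((1 + η * L) ^ 2 * (‖e‖ ^ 2 + ‖e'‖ ^ 2)) := by positivity
    linarith
  have hfin2 := mul_le_mul_of_nonneg_left hfin (show 0 ≤ 1 / (α * η) by positivity)
  have e5 : 1 / (α * η) * (α * (η * ⟪G, q - x⟫ - ⟪q - x, D⟫))
      = ⟪G, q - x⟫ - 1 / η * ⟪q - x, D⟫ := by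
    field_simp
  have e6 : 1 / (α * η) * (L ^ 2 * η ^ 2 * ‖D‖ ^ 2 - ‖D‖ ^ 2
      + 2 * α * γ * ((1 + L ^ 2 * η ^ 2) * ‖D‖ ^ 2)
      + 1 / (α * γ) * (2 * (1 + η * L) ^ 2 * (‖e‖ ^ 2 + ‖e'‖ ^ 2)))
      = - ((2 - α * (L * η + 1) - 2 * L ^ 2 * η ^ 2 - 4 * α * γ * (1 + L ^ 2 * η ^ 2))
            / (2 * α * η) * ‖D‖ ^ 2) - 1 / (2 * η) * ‖D‖ ^ 2 - L / 2 * ‖D‖ ^ 2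
        + 2 * (1 + η * L) ^ 2 / (γ * η * α ^ 2) * (‖e‖ ^ 2 + ‖e'‖ ^ 2) := by
    field_simp
    ring
  rw [e5, e6] at hfin2
  have e7 : 1 / (2 * η) * (‖q - x‖ ^ 2 - 2 * ⟪q - x, D⟫ + ‖D‖ ^ 2)
      = 1 / (2 * η) * ‖q - x‖ ^ 2 - 1 / η * ⟪q - x, D⟫ + 1 / (2 * η) * ‖D‖ ^ 2 := by
    field_simp
  rw [e7]
  linarith

end FedDRHelpers

/-- **Sure descent for one inexact FedDR step (Lemma A.5).**
For an arbitrary subset `S ⊆ {1,…,n}` and one inexact FedDR step, with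
`V_η(x̄; x) := g(x̄) + (1/n)Σᵢ[fᵢ(xᵢ) + ⟨∇fᵢ(xᵢ), x̄ − xᵢ⟩ + (1/(2η))‖x̄ − xᵢ‖²]` and
`E² := (1/n)Σᵢ‖e'ᵢ‖²`:
`V_η(x̄'; x') ≤ V_η(x̄; x) − ([2 − α(Lη+1) − 2L²η² − 4αγ₄(1+L²η²)]/(2αηn)) Σ_{i∈S}‖x'ᵢ − xᵢ‖²
  − ((1−γ₃)/(2η))‖x̄' − x̄‖² + ((1+η²L²)/(ηγ₃))E²
  + (2(1+ηL)²/(γ₄ηα²n)) Σ_{i∈S}(‖eᵢ‖² + ‖e'ᵢ‖²)`. -/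
theorem feddr_sure_descent_one_step {pdim n : ℕ} (hn : 0 < n)
    (f : Fin n → EuclideanSpace ℝ (Fin pdim) → ℝ) (L : ℝ) (hL : 0 < L)
    (hdiff : ∀ i, Differentiable ℝ (f i))
    (hlip : ∀ i u v, ‖gradient (f i) u - gradient (f i) v‖ ≤ L * ‖u - v‖)
    (g : EuclideanSpace ℝ (Fin pdim) → ℝ)
    (hgconv : ConvexOn ℝ Set.univ g) (hglsc : LowerSemicontinuous g)
    (α η γ₃ γ₄ : ℝ) (hα : 0 < α) (hη : 0 < η) (hγ₃ : 0 < γ₃) (hγ₄ : 0 < γ₄)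
    (proxg : EuclideanSpace ℝ (Fin pdim) → EuclideanSpace ℝ (Fin pdim))
    (hproxg : ∀ u, IsMinOn (fun w => g w + (1 / (2 * η)) * ‖w - u‖ ^ 2) Set.univ (proxg u))
    (hproxg_unique : ∀ u w,
      IsMinOn (fun w' => g w' + (1 / (2 * η)) * ‖w' - u‖ ^ 2) Set.univ w → w = proxg u)
    (S : Finset (Fin n))
    (y z x e y' z' x' e' : Fin n → EuclideanSpace ℝ (Fin pdim))
    (xbar xbar' : EuclideanSpace ℝ (Fin pdim))
    (hy : ∀ i, y i = z i + η • gradient (f i) (z i))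
    (hx : ∀ i, x i = z i + e i)
    (hupd : ∀ i ∈ S,
      y' i = y i + α • (xbar - x i) ∧
      IsMinOn (fun u => f i u + (1 / (2 * η)) * ‖u - y' i‖ ^ 2) Set.univ (z' i) ∧
      x' i = z' i + e' i)
    (hkeep : ∀ i ∉ S, y' i = y i ∧ z' i = z i ∧ x' i = x i ∧ e' i = e i)
    (hxbar' : xbar' = proxg ((n : ℝ)⁻¹ • ∑ i, ((2 : ℝ) • x' i - y' i))) :
    g xbar' + (n : ℝ)⁻¹ * ∑ i,
        (f i (x' i) + ⟪gradient (f i) (x' i), xbar' - x' i⟫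
          + (1 / (2 * η)) * ‖xbar' - x' i‖ ^ 2) ≤
      (g xbar + (n : ℝ)⁻¹ * ∑ i,
          (f i (x i) + ⟪gradient (f i) (x i), xbar - x i⟫
            + (1 / (2 * η)) * ‖xbar - x i‖ ^ 2))
        - ((2 - α * (L * η + 1) - 2 * L ^ 2 * η ^ 2 - 4 * α * γ₄ * (1 + L ^ 2 * η ^ 2))
            / (2 * α * η * n)) * ∑ i ∈ S, ‖x' i - x i‖ ^ 2
        - ((1 - γ₃) / (2 * η)) * ‖xbar' - xbar‖ ^ 2
        + ((1 + η ^ 2 * L ^ 2) / (η * γ₃)) * ((n : ℝ)⁻¹ * ∑ i, ‖e' i‖ ^ 2)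
        + (2 * (1 + η * L) ^ 2 / (γ₄ * η * α ^ 2 * n))
            * ∑ i ∈ S, (‖e i‖ ^ 2 + ‖e' i‖ ^ 2) := by
  have hnR : (0 : ℝ) < n := by exact_mod_cast hn
  have hn0 : (n : ℝ) ≠ 0 := hnR.ne'
  have hy' : ∀ i, y' i = z' i + η • gradient (f i) (z' i) := by
    intro i
    by_cases hi : i ∈ S
    · exact feddr_prox_smooth_aux (f i) η hη (hdiff i) _ _ (hupd i hi).2.1
    · obtain ⟨h1, h2, -, -⟩ := hkeep i hi
      rw [h1, h2]
      exact hy i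
  have hx' : ∀ i, x' i = z' i + e' i := by
    intro i
    by_cases hi : i ∈ S
    · exact (hupd i hi).2.2
    · obtain ⟨-, h2, h3, h4⟩ := hkeep i hi
      rw [h2, h3, h4]
      exact hx i
  have hg := feddr_prox_convex_aux g hgconv η _ _ xbar
    (hproxg ((n : ℝ)⁻¹ • ∑ i, ((2 : ℝ) • x' i - y' i)))
  rw [← hxbar'] at hg
  set A := (2 - α * (L * η + 1) - 2 * L ^ 2 * η ^ 2 - 4 * α * γ₄ * (1 + L ^ 2 * η ^ 2))
            / (2 * α * η) with hA
  set B := 2 * (1 + η * L) ^ 2 / (γ₄ * η * α ^ 2) with hB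
  have hA' : (2 - α * (L * η + 1) - 2 * L ^ 2 * η ^ 2 - 4 * α * γ₄ * (1 + L ^ 2 * η ^ 2))
            / (2 * α * η * n) = (n : ℝ)⁻¹ * A := by
    rw [hA, ← div_div, div_eq_inv_mul _ (n : ℝ)]
  have hB' : 2 * (1 + η * L) ^ 2 / (γ₄ * η * α ^ 2 * n) = (n : ℝ)⁻¹ * B := by
    rw [hB, ← div_div, div_eq_inv_mul _ (n : ℝ)]
  rw [hA', hB']
  have hinner : ⟪xbar' - (n : ℝ)⁻¹ • ∑ i, ((2 : ℝ) • x' i - y' i), xbar - xbar'⟫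
      = (n : ℝ)⁻¹ * ∑ i, ⟪xbar' - ((2 : ℝ) • x' i - y' i), xbar - xbar'⟫ := by
    rw [← sum_inner, Finset.sum_sub_distrib (fun _ => xbar'), Finset.sum_const, Finset.card_univ, Fintype.card_fin,
      ← real_inner_smul_left, smul_sub, ← Nat.cast_smul_eq_nsmul ℝ, smul_smul,
      inv_mul_cancel₀ hn0, one_smul]
  rw [hinner] at hg
  have hstep1 : ∀ i,
      (f i (x' i) + ⟪gradient (f i) (x' i), xbar' - x' i⟫ + (1 / (2 * η)) * ‖xbar' - x' i‖ ^ 2)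
        + 1 / η * ⟪xbar' - ((2 : ℝ) • x' i - y' i), xbar - xbar'⟫
      ≤ (f i (x' i) + ⟪gradient (f i) (x' i), xbar - x' i⟫ + (1 / (2 * η)) * ‖xbar - x' i‖ ^ 2)
        - (1 - γ₃) / (2 * η) * ‖xbar' - xbar‖ ^ 2
        + (1 + η ^ 2 * L ^ 2) / (η * γ₃) * ‖e' i‖ ^ 2 := by
    intro i
    have := feddr_xbar_step_aux L η γ₃ hη hγ₃ (y' i) (z' i) (x' i) (e' i) _ _ xbar' xbar
      (hy' i) (hx' i) (hlip i (x' i) (z' i))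
    linarith
  have hstep2 : ∀ i,
      (f i (x' i) + ⟪gradient (f i) (x' i), xbar - x' i⟫ + (1 / (2 * η)) * ‖xbar - x' i‖ ^ 2)
      ≤ (f i (x i) + ⟪gradient (f i) (x i), xbar - x i⟫ + (1 / (2 * η)) * ‖xbar - x i‖ ^ 2)
        - A * (if i ∈ S then ‖x' i - x i‖ ^ 2 else 0)
        + B * (if i ∈ S then (‖e i‖ ^ 2 + ‖e' i‖ ^ 2) else 0) := by
    intro i
    by_cases hi : i ∈ S
    · rw [if_pos hi, if_pos hi]
      exact feddr_local_step_aux L α η γ₄ hL hα hη hγ₄ (y i) (z i) (x i) (e i) _ _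
        (y' i) (z' i) (x' i) (e' i) _ _ xbar (f i (x i)) (f i (x' i))
        (hy i) (hx i) (hy' i) (hx' i) (hupd i hi).1 (hlip i _ _) (hlip i _ _) (hlip i _ _)
        (feddr_descent_aux (f i) L (hdiff i) (hlip i) (x' i) (x i))
    · rw [if_neg hi, if_neg hi, (hkeep i hi).2.2.1]
      simp
  have hsum := Finset.sum_le_sum (s := Finset.univ) fun i _ =>
    (hstep1 i).trans (add_le_add_left (sub_le_sub_right (hstep2 i) _) _)
  simp only [Finset.sum_add_distrib, Finset.sum_sub_distrib, ← Finset.mul_sum, Finset.sum_const,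
    Finset.card_univ, Fintype.card_fin, nsmul_eq_mul, Finset.sum_ite_mem, Finset.univ_inter]
    at hsum ⊢
  have hsum2 := mul_le_mul_of_nonneg_left hsum (inv_pos.2 hnR).le
  have hc : (n : ℝ)⁻¹ * ((n : ℝ) * ((1 - γ₃) / (2 * η) * ‖xbar' - xbar‖ ^ 2))
      = (1 - γ₃) / (2 * η) * ‖xbar' - xbar‖ ^ 2 := by
    rw [← mul_assoc, inv_mul_cancel₀ hn0, one_mul]
  simp only [mul_add, mul_sub] at hsum2 ⊢
  linarith
end

section
/- Bound on the residual of an active user (Lemma A.2). Let f : ℝ^p → ℝ be differentiable with L-Lipschitz gradient, and let α, η > 0 and γ₁ > 0. Suppose y, y', z, z', x, x', e, e', x̄ ∈ ℝ^p satisfy y' = y + α(x̄ − x), y = z + η∇f(z), y' = z' + η∇f(z'), x = z + e, and x' = z' + e'. Then ‖x̄ − x‖² ≤ (2(1+η²L²)/α²)[(1+γ₁)‖x' − x‖² + (2(1+γ₁)/γ₁)(‖e'‖² + ‖e‖²)]. In particular, if e = e' = 0 then ‖x̄ − x‖² ≤ (2(1+η²L²)/α²)‖x' − x‖². -/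
open scoped RealInnerProductSpace

/-- **Bound on the residual of an active user (Lemma A.2).**
Let `f : ℝ^p → ℝ` be differentiable with `L`-Lipschitz gradient, `α, η, γ₁ > 0`.
If `y' = y + α(x̄ − x)`, `y = z + η∇f(z)`, `y' = z' + η∇f(z')`, `x = z + e`, `x' = z' + e'`,
then `‖x̄ − x‖² ≤ (2(1+η²L²)/α²)[(1+γ₁)‖x' − x‖² + (2(1+γ₁)/γ₁)(‖e'‖² + ‖e‖²)]`;
in particular, if `e = e' = 0` then `‖x̄ − x‖² ≤ (2(1+η²L²)/α²)‖x' − x‖²`. -/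
theorem feddr_residual_bound_active_user {p : ℕ}
    (f : EuclideanSpace ℝ (Fin p) → ℝ) (L : ℝ) (hL : 0 < L)
    (hdiff : Differentiable ℝ f)
    (hlip : ∀ u v, ‖gradient f u - gradient f v‖ ≤ L * ‖u - v‖)
    (α η γ₁ : ℝ) (hα : 0 < α) (hη : 0 < η) (hγ₁ : 0 < γ₁)
    (y y' z z' x x' e e' xbar : EuclideanSpace ℝ (Fin p))
    (hy' : y' = y + α • (xbar - x))
    (hyz : y = z + η • gradient f z)
    (hy'z' : y' = z' + η • gradient f z')
    (hx : x = z + e) (hx' : x' = z' + e') :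
    ‖xbar - x‖ ^ 2 ≤ (2 * (1 + η ^ 2 * L ^ 2) / α ^ 2) *
        ((1 + γ₁) * ‖x' - x‖ ^ 2 + (2 * (1 + γ₁) / γ₁) * (‖e'‖ ^ 2 + ‖e‖ ^ 2)) ∧
      (e = 0 → e' = 0 →
        ‖xbar - x‖ ^ 2 ≤ (2 * (1 + η ^ 2 * L ^ 2) / α ^ 2) * ‖x' - x‖ ^ 2) := by
  have h1 : α • (xbar - x) = (z' - z) + η • (gradient f z' - gradient f z) := by
    have h : α • (xbar - x) = y' - y := by rw [hy']; abel
    rw [h, hyz, hy'z', smul_sub]; abel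
  have h2 : α * ‖xbar - x‖ ≤ (1 + η * L) * ‖z' - z‖ := by
    have h3 : ‖α • (xbar - x)‖ = α * ‖xbar - x‖ := by
      rw [norm_smul, Real.norm_of_nonneg hα.le]
    rw [← h3, h1]
    refine (norm_add_le _ _).trans ?_
    rw [norm_smul, Real.norm_of_nonneg hη.le]
    have := mul_le_mul_of_nonneg_left (hlip z' z) hη.le
    linarith
  have h4 : ‖xbar - x‖ ^ 2 ≤ (2 * (1 + η ^ 2 * L ^ 2) / α ^ 2) * ‖z' - z‖ ^ 2 := by
    rw [div_mul_eq_mul_div, le_div_iff₀ (by positivity)]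
    have h5 : (α * ‖xbar - x‖) ^ 2 ≤ ((1 + η * L) * ‖z' - z‖) ^ 2 :=
      pow_le_pow_left₀ (by positivity) h2 2
    have h6 : 0 ≤ ((1 - η * L) * ‖z' - z‖) ^ 2 := sq_nonneg _
    nlinarith
  have h7 : ‖z' - z‖ ≤ ‖x' - x‖ + (‖e'‖ + ‖e‖) := by
    have : z' - z = (x' - x) - (e' - e) := by rw [hx, hx']; abel
    rw [this]
    have ha := norm_sub_le (x' - x) (e' - e)
    have hb := norm_sub_le e' e
    linarith
  have h8 : ‖z' - z‖ ^ 2 ≤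
      (1 + γ₁) * ‖x' - x‖ ^ 2 + (2 * (1 + γ₁) / γ₁) * (‖e'‖ ^ 2 + ‖e‖ ^ 2) := by
    refine (pow_le_pow_left₀ (norm_nonneg _) h7 2).trans ?_
    generalize ‖x' - x‖ = a
    generalize ‖e'‖ = b
    generalize ‖e‖ = c
    have : (1 + γ₁) * a ^ 2 + (2 * (1 + γ₁) / γ₁) * (b ^ 2 + c ^ 2) - (a + (b + c)) ^ 2
        = (γ₁ * a - (b + c)) ^ 2 / γ₁ + (1 + γ₁) / γ₁ * (b - c) ^ 2 := by
      field_simp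
      ring
    have h9 : 0 ≤ (γ₁ * a - (b + c)) ^ 2 / γ₁ + (1 + γ₁) / γ₁ * (b - c) ^ 2 := by positivity
    linarith
  refine ⟨h4.trans (mul_le_mul_of_nonneg_left h8 (by positivity)), ?_⟩
  intro he he'
  rw [show x' - x = z' - z by rw [hx, hx', he, he']; simp]
  exact h4
end

section
/- Gradient-mapping bound (Lemma A.3). Let η > 0 and γ₂ > 0. Suppose for each i = 1,…,n that y_i = z_i + η∇f_i(z_i) and x_i = z_i + e_i, and set x̄ := prox_{ηg}((1/n)Σ_{i=1}^n (2x_i − y_i)). Then ‖G_η(x̄)‖² ≤ ((1+ηL)²/(nη²)) Σ_{i=1}^n [(1+γ₂)‖x_i − x̄‖² + ((1+γ₂)/γ₂)‖e_i‖²]. In particular, if e_i = 0 for all i, then ‖G_η(x̄)‖² ≤ ((1+ηL)²/(nη²)) Σ_{i=1}^n ‖x_i − x̄‖². -/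
lemma prox_var {E : Type*} [NormedAddCommGroup E] [InnerProductSpace ℝ E] (g : E → ℝ)
    (hg : ConvexOn ℝ Set.univ g) (c : ℝ) (a p : E)
    (hp : IsMinOn (fun w => g w + c * ‖w - a‖ ^ 2) Set.univ p) (w : E) :
    g p ≤ g w + 2 * c * inner ℝ (p - a) (w - p) := by
  have key : ∀ t : ℝ, 0 < t → t < 1 →
      g p ≤ g w + 2 * c * inner ℝ (p - a) (w - p) + t * (c * ‖w - p‖ ^ 2) := by
    intro t ht0 ht1
    have h1 := (isMinOn_univ_iff.mp hp) ((1 - t) • p + t • w)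
    have h2 := hg.2 (Set.mem_univ p) (Set.mem_univ w) (by linarith : 0 ≤ 1 - t) ht0.le (by ring)
    have h3 : (1 - t) • p + t • w - a = (p - a) + t • (w - p) := by module
    have h4 := norm_add_sq_real (p - a) (t • (w - p))
    rw [norm_smul, inner_smul_right, mul_pow, Real.norm_eq_abs, sq_abs] at h4
    simp only [h3, h4, smul_eq_mul] at h1 h2
    have : t * g p ≤ t * (g w + 2 * c * inner ℝ (p - a) (w - p) + t * (c * ‖w - p‖ ^ 2)) := by
      linarith
    exact le_of_mul_le_mul_left this ht0
  have hlim : Filter.Tendsto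
      (fun t : ℝ => g w + 2 * c * inner ℝ (p - a) (w - p) + t * (c * ‖w - p‖ ^ 2))
      (nhdsWithin 0 (Set.Ioi 0)) (nhds (g w + 2 * c * inner ℝ (p - a) (w - p))) := by
    have : Continuous
      (fun t : ℝ => g w + 2 * c * inner ℝ (p - a) (w - p) + t * (c * ‖w - p‖ ^ 2)) := by fun_prop
    have h := this.tendsto 0
    simp only [zero_mul, add_zero] at h
    exact h.mono_left nhdsWithin_le_nhds
  refine ge_of_tendsto hlim ?_
  filter_upwards [Ioo_mem_nhdsGT (zero_lt_one (α := ℝ))] with t ht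
  exact key t ht.1 ht.2

lemma prox_nonexp {E : Type*} [NormedAddCommGroup E] [InnerProductSpace ℝ E] (g : E → ℝ)
    (hg : ConvexOn ℝ Set.univ g) (c : ℝ) (hc : 0 < c) (a b p q : E)
    (hp : IsMinOn (fun w => g w + c * ‖w - a‖ ^ 2) Set.univ p)
    (hq : IsMinOn (fun w => g w + c * ‖w - b‖ ^ 2) Set.univ q) :
    ‖p - q‖ ≤ ‖a - b‖ := by
  have h1 := prox_var g hg c a p hp q
  have h2 := prox_var g hg c b q hq p
  have h3 : inner ℝ (p - a) (q - p) + inner ℝ (q - b) (p - q)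
      = inner ℝ (a - b) (p - q) - ‖p - q‖ ^ 2 := by
    rw [← real_inner_self_eq_norm_sq, ← neg_sub p q, inner_neg_right]
    rw [← inner_neg_left, ← inner_add_left, ← inner_sub_left]
    congr 1
    abel
  have h4 : 0 ≤ 2 * c * (inner ℝ (a - b) (p - q) - ‖p - q‖ ^ 2) := by
    rw [← h3]; linarith
  have h5 : 0 ≤ inner ℝ (a - b) (p - q) - ‖p - q‖ ^ 2 :=
    nonneg_of_mul_nonneg_right h4 (by positivity)
  have h6 := real_inner_le_norm (a - b) (p - q)
  by_contra! h
  nlinarith [norm_nonneg (a - b), norm_nonneg (p - q)]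

/-- **Gradient-mapping bound (Lemma A.3).**
Let `η, γ₂ > 0`, `yᵢ = zᵢ + η∇fᵢ(zᵢ)`, `xᵢ = zᵢ + eᵢ`, and
`x̄ := prox_{ηg}((1/n)Σᵢ(2xᵢ − yᵢ))`. Then, with `G_η(u) := (1/η)(u − prox_{ηg}(u − η∇f(u)))`
and `∇f(u) = (1/n)Σᵢ∇fᵢ(u)`:
`‖G_η(x̄)‖² ≤ ((1+ηL)²/(nη²))Σᵢ[(1+γ₂)‖xᵢ − x̄‖² + ((1+γ₂)/γ₂)‖eᵢ‖²]`;
in particular, if all `eᵢ = 0`, `‖G_η(x̄)‖² ≤ ((1+ηL)²/(nη²))Σᵢ‖xᵢ − x̄‖²`. -/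
theorem feddr_gradient_mapping_bound {pdim n : ℕ} (hn : 0 < n)
    (f : Fin n → EuclideanSpace ℝ (Fin pdim) → ℝ) (L : ℝ) (hL : 0 < L)
    (hdiff : ∀ i, Differentiable ℝ (f i))
    (hlip : ∀ i u v, ‖gradient (f i) u - gradient (f i) v‖ ≤ L * ‖u - v‖)
    (g : EuclideanSpace ℝ (Fin pdim) → ℝ)
    (hgconv : ConvexOn ℝ Set.univ g) (hglsc : LowerSemicontinuous g)
    (η γ₂ : ℝ) (hη : 0 < η) (hγ₂ : 0 < γ₂)
    (proxg : EuclideanSpace ℝ (Fin pdim) → EuclideanSpace ℝ (Fin pdim))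
    (hproxg : ∀ u, IsMinOn (fun w => g w + (1 / (2 * η)) * ‖w - u‖ ^ 2) Set.univ (proxg u))
    (hproxg_unique : ∀ u w,
      IsMinOn (fun w' => g w' + (1 / (2 * η)) * ‖w' - u‖ ^ 2) Set.univ w → w = proxg u)
    (y z x e : Fin n → EuclideanSpace ℝ (Fin pdim))
    (hy : ∀ i, y i = z i + η • gradient (f i) (z i))
    (hx : ∀ i, x i = z i + e i)
    (xbar : EuclideanSpace ℝ (Fin pdim))
    (hxbar : xbar = proxg ((n : ℝ)⁻¹ • ∑ i, ((2 : ℝ) • x i - y i))) :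
    ‖(1 / η) • (xbar -
          proxg (xbar - η • ((n : ℝ)⁻¹ • ∑ i, gradient (f i) xbar)))‖ ^ 2 ≤
        ((1 + η * L) ^ 2 / (n * η ^ 2)) *
          ∑ i, ((1 + γ₂) * ‖x i - xbar‖ ^ 2 + ((1 + γ₂) / γ₂) * ‖e i‖ ^ 2) ∧
      ((∀ i, e i = 0) →
        ‖(1 / η) • (xbar -
            proxg (xbar - η • ((n : ℝ)⁻¹ • ∑ i, gradient (f i) xbar)))‖ ^ 2 ≤
          ((1 + η * L) ^ 2 / (n * η ^ 2)) * ∑ i, ‖x i - xbar‖ ^ 2) := by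
  have hn' : (0 : ℝ) < n := by exact_mod_cast hn
  have main : ‖(1 / η) • (xbar -
          proxg (xbar - η • ((n : ℝ)⁻¹ • ∑ i, gradient (f i) xbar)))‖ ^ 2 ≤
        ((1 + η * L) ^ 2 / (n * η ^ 2)) * ∑ i, (‖x i - xbar‖ + ‖e i‖) ^ 2 := by
    have h1 := prox_nonexp g hgconv (1 / (2 * η)) (by positivity) _ _ _ _
      (hproxg ((n : ℝ)⁻¹ • ∑ i, ((2 : ℝ) • x i - y i)))
      (hproxg (xbar - η • ((n : ℝ)⁻¹ • ∑ i, gradient (f i) xbar)))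
    rw [← hxbar] at h1
    have h2 : (n : ℝ)⁻¹ • ∑ i, ((2 : ℝ) • x i - y i)
        - (xbar - η • ((n : ℝ)⁻¹ • ∑ i, gradient (f i) xbar))
        = (n : ℝ)⁻¹ • ∑ i, ((x i - xbar + e i)
          + η • (gradient (f i) xbar - gradient (f i) (z i))) := by
      have hxb : xbar = (n : ℝ)⁻¹ • ∑ i : Fin n, xbar := by
        rw [Finset.sum_const, Finset.card_univ, Fintype.card_fin, ← Nat.cast_smul_eq_nsmul ℝ,
          smul_smul, inv_mul_cancel₀ hn'.ne', one_smul]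
      have h : ∀ w : EuclideanSpace ℝ (Fin pdim), w = (n : ℝ)⁻¹ • ∑ i : Fin n, xbar →
        (n : ℝ)⁻¹ • ∑ i, ((2 : ℝ) • x i - y i)
        - (w - η • ((n : ℝ)⁻¹ • ∑ i, gradient (f i) xbar))
        = (n : ℝ)⁻¹ • ∑ i, ((x i - xbar + e i)
          + η • (gradient (f i) xbar - gradient (f i) (z i))) := by
        rintro w rfl
        rw [smul_comm η, ← smul_sub, ← smul_sub, Finset.smul_sum, ← Finset.sum_sub_distrib,
          ← Finset.sum_sub_distrib]
        congr 1
        refine Finset.sum_congr rfl fun i _ => ?_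
        rw [hy, hx]
        module
      exact h xbar hxb
    have h3 : ∀ i, ‖(x i - xbar + e i)
          + η • (gradient (f i) xbar - gradient (f i) (z i))‖
          ≤ (1 + η * L) * (‖x i - xbar‖ + ‖e i‖) := by
      intro i
      have a1 := norm_add_le (x i - xbar + e i) (η • (gradient (f i) xbar - gradient (f i) (z i)))
      have a2 := norm_add_le (x i - xbar) (e i)
      have a3 := hlip i xbar (z i)
      have a4 : ‖xbar - z i‖ ≤ ‖x i - xbar‖ + ‖e i‖ := by
        have : xbar - z i = e i - (x i - xbar) := by rw [hx]; abel
        rw [this, add_comm]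
        exact norm_sub_le _ _
      rw [norm_smul, Real.norm_of_nonneg hη.le] at a1
      have a5 := a3.trans (mul_le_mul_of_nonneg_left a4 hL.le)
      have a6 := mul_le_mul_of_nonneg_left a5 hη.le
      linarith
    rw [h2, norm_smul, norm_inv, Real.norm_of_nonneg hn'.le] at h1
    have h4 := (norm_sum_le Finset.univ _).trans (Finset.sum_le_sum fun i _ => h3 i)
    rw [← Finset.mul_sum] at h4
    have h5 := h1.trans (mul_le_mul_of_nonneg_left h4 (by positivity))
    have h6 := pow_le_pow_left₀ (norm_nonneg _) h5 2
    have h7 := sq_sum_le_card_mul_sum_sq (s := (Finset.univ : Finset (Fin n)))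
      (f := fun i => ‖x i - xbar‖ + ‖e i‖)
    rw [Finset.card_univ, Fintype.card_fin] at h7
    rw [norm_smul, mul_pow, norm_div, norm_one, Real.norm_of_nonneg hη.le]
    calc _ ≤ (1 / η) ^ 2 * ((n : ℝ)⁻¹ * ((1 + η * L) * ∑ i, (‖x i - xbar‖ + ‖e i‖))) ^ 2 := by
          gcongr
      _ = ((1 + η * L) ^ 2 / (n ^ 2 * η ^ 2)) * (∑ i, (‖x i - xbar‖ + ‖e i‖)) ^ 2 := by
          field_simp
      _ ≤ ((1 + η * L) ^ 2 / (n ^ 2 * η ^ 2)) * (n * ∑ i, (‖x i - xbar‖ + ‖e i‖) ^ 2) := by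
          gcongr
      _ = _ := by field_simp
  refine ⟨main.trans ?_, fun he => by simpa [he] using main⟩
  refine mul_le_mul_of_nonneg_left (Finset.sum_le_sum fun i _ => ?_) (by positivity)
  generalize ‖x i - xbar‖ = s
  generalize ‖e i‖ = t
  have : (1 + γ₂) * s ^ 2 + ((1 + γ₂) / γ₂) * t ^ 2 - (s + t) ^ 2 = (γ₂ * s - t) ^ 2 / γ₂ := by
    field_simp
    ring
  have h : 0 ≤ (γ₂ * s - t) ^ 2 / γ₂ := by positivity
  linarith
end

section
/- Lower bound on the Lyapunov function. Let 0 < η ≤ 1/L, x̄ ∈ dom g, and x₁,…,xₙ ∈ ℝ^p. Then V_η(x̄; x₁,…,xₙ) ≥ F(x̄) + ((1/η) − L)·(1/(2n)) Σ_{i=1}^n ‖x̄ − x_i‖² ≥ F⋆, where F⋆ := inf F is assumed finite. -/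
open scoped RealInnerProductSpace

theorem descent_aux {pdim : ℕ} (f : EuclideanSpace ℝ (Fin pdim) → ℝ) (L : ℝ)
    (hdiff : Differentiable ℝ f)
    (hlip : ∀ u v, ‖gradient f u - gradient f v‖ ≤ L * ‖u - v‖)
    (y x : EuclideanSpace ℝ (Fin pdim)) :
    f y ≤ f x + ⟪gradient f x, y - x⟫ + L / 2 * ‖y - x‖ ^ 2 := by
  set d := y - x with hd
  have hder : ∀ t : ℝ, HasDerivAt
      (fun t : ℝ => f (x + t • d) - t * ⟪gradient f x, d⟫ - L / 2 * ‖d‖ ^ 2 * t ^ 2)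
      (⟪gradient f (x + t • d), d⟫ - ⟪gradient f x, d⟫ - L * ‖d‖ ^ 2 * t) t := by
    intro t
    have h1 : HasDerivAt (fun t : ℝ => x + t • d) d t := by
      simpa using ((hasDerivAt_id t).smul_const d).const_add x
    have h2 : HasDerivAt (fun t : ℝ => f (x + t • d)) ⟪gradient f (x + t • d), d⟫ t := by
      simpa [Function.comp_def] using (hdiff (x + t • d)).hasGradientAt.hasFDerivAt.comp_hasDerivAt t h1
    have h3 : HasDerivAt (fun t : ℝ => t * ⟪gradient f x, d⟫) ⟪gradient f x, d⟫ t := by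
      simpa using (hasDerivAt_id t).mul_const ⟪gradient f x, d⟫
    have h4 : HasDerivAt (fun t : ℝ => L / 2 * ‖d‖ ^ 2 * t ^ 2) (L * ‖d‖ ^ 2 * t) t := by
      refine ((hasDerivAt_pow 2 t).const_mul (L / 2 * ‖d‖ ^ 2)).congr_deriv ?_
      norm_num
      ring
    exact (h2.sub h3).sub h4
  have hanti : AntitoneOn
      (fun t : ℝ => f (x + t • d) - t * ⟪gradient f x, d⟫ - L / 2 * ‖d‖ ^ 2 * t ^ 2)
      (Set.Icc 0 1) := by
    apply antitoneOn_of_deriv_nonpos (convex_Icc 0 1)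
    · exact fun t _ => (hder t).continuousAt.continuousWithinAt
    · exact fun t _ => (hder t).differentiableAt.differentiableWithinAt
    · intro t ht
      rw [interior_Icc] at ht
      rw [(hder t).deriv, ← inner_sub_left]
      have h1 := real_inner_le_norm (gradient f (x + t • d) - gradient f x) d
      have h2 := hlip (x + t • d) x
      rw [add_sub_cancel_left, norm_smul, Real.norm_of_nonneg ht.1.le] at h2
      have h3 := mul_le_mul_of_nonneg_right h2 (norm_nonneg d)
      nlinarith
  have h := hanti (Set.left_mem_Icc.2 zero_le_one) (Set.right_mem_Icc.2 zero_le_one) zero_le_one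
  have hy : x + d = y := by rw [hd]; abel
  simp only [one_smul, zero_smul, add_zero, hy] at h
  linarith

/-- **Lower bound on the Lyapunov function.**
For `0 < η ≤ 1/L`, any `x̄` and `x₁,…,xₙ`:
`V_η(x̄; x₁,…,xₙ) ≥ F(x̄) + ((1/η) − L)(1/(2n))Σᵢ‖x̄ − xᵢ‖² ≥ F⋆`, where
`V_η(x̄; x) := g(x̄) + (1/n)Σᵢ[fᵢ(xᵢ) + ⟨∇fᵢ(xᵢ), x̄ − xᵢ⟩ + (1/(2η))‖x̄ − xᵢ‖²]`,
`F := (1/n)Σᵢ fᵢ + g` and `F⋆ := inf F` is finite. -/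
theorem feddr_lyapunov_lower_bound {pdim n : ℕ} (hn : 0 < n)
    (f : Fin n → EuclideanSpace ℝ (Fin pdim) → ℝ) (L : ℝ) (hL : 0 < L)
    (hdiff : ∀ i, Differentiable ℝ (f i))
    (hlip : ∀ i u v, ‖gradient (f i) u - gradient (f i) v‖ ≤ L * ‖u - v‖)
    (g : EuclideanSpace ℝ (Fin pdim) → ℝ)
    (hgconv : ConvexOn ℝ Set.univ g) (hglsc : LowerSemicontinuous g)
    (η : ℝ) (hη0 : 0 < η) (hη : η ≤ 1 / L)
    (Fstar : ℝ)
    (hFstar : IsGLB (Set.range fun u => (n : ℝ)⁻¹ * ∑ i, f i u + g u) Fstar)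
    (xbar : EuclideanSpace ℝ (Fin pdim)) (x : Fin n → EuclideanSpace ℝ (Fin pdim)) :
    ((n : ℝ)⁻¹ * ∑ i, f i xbar + g xbar)
        + ((1 / η) - L) * (1 / (2 * n)) * ∑ i, ‖xbar - x i‖ ^ 2 ≤
      g xbar + (n : ℝ)⁻¹ * ∑ i,
        (f i (x i) + ⟪gradient (f i) (x i), xbar - x i⟫ + (1 / (2 * η)) * ‖xbar - x i‖ ^ 2) ∧
    Fstar ≤ ((n : ℝ)⁻¹ * ∑ i, f i xbar + g xbar)
        + ((1 / η) - L) * (1 / (2 * n)) * ∑ i, ‖xbar - x i‖ ^ 2 := by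
  have hn' : (0 : ℝ) < n := by exact_mod_cast hn
  constructor
  · have key : ∑ i, f i xbar + (1 / η - L) * (1 / 2) * ∑ i, ‖xbar - x i‖ ^ 2 ≤ ∑ i,
        (f i (x i) + ⟪gradient (f i) (x i), xbar - x i⟫
          + (1 / (2 * η)) * ‖xbar - x i‖ ^ 2) := by
      rw [Finset.mul_sum, ← Finset.sum_add_distrib]
      apply Finset.sum_le_sum
      intro i _
      have h := descent_aux (f i) L (hdiff i) (hlip i) xbar (x i)
      have e : 1 / (2 * η) = 1 / η * (1 / 2) := by field_simp
      rw [e]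
      nlinarith
    have h := mul_le_mul_of_nonneg_left key (inv_nonneg.2 hn'.le)
    have e : (1 : ℝ) / (2 * n) = (n : ℝ)⁻¹ * (1 / 2) := by field_simp
    rw [e]
    nlinarith
  · have h1 : Fstar ≤ (n : ℝ)⁻¹ * ∑ i, f i xbar + g xbar := hFstar.1 ⟨xbar, rfl⟩
    have h2 : 0 ≤ 1 / η - L := by
      rw [sub_nonneg, le_div_iff₀ hη0]
      rw [le_div_iff₀ hL] at hη
      linarith
    have h3 : 0 ≤ ((1 / η) - L) * (1 / (2 * n)) * ∑ i, ‖xbar - x i‖ ^ 2 := by positivity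
    linarith
end

section
/- Residual bound for asyncFedDR (Lemma B.3 / eq. (asdr_thm_eq11)). Consider the asynchronous FedDR process as a stochastic process with filtration F_j = σ((î_0, d̂⁰),…,(î_j, d̂^j)), delays bounded by τ with d̂^j_{î_j} = 0, and suppose for every user i and iteration k there exists t ∈ {0,…,T} with P(î_{k+t} = i | F_{k+t−1}) ≥ p̂ almost surely, where p̂ > 0. Let D := [8α²(1+L²η²)(τ² + 2Tnp̂) + 8n²(1+L²η² + Tα²p̂)]/(p̂α²n²). Then for every k ≥ τ: Σ_{i=1}^n E[‖x̄^k − x_i^k‖²] ≤ D · Σ_{t=k−τ}^{k+T} E[‖x_{î_t}^{t+1} − x_{î_t}^t‖²]. -/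
open MeasureTheory ProbabilityTheory

lemma aux_prox_nonexp {E : Type*} [NormedAddCommGroup E] [InnerProductSpace ℝ E]
    (g : E → ℝ) (hg : ConvexOn ℝ Set.univ g) (c : ℝ) (hc : 0 < c) (P : E → E)
    (hP : ∀ u, IsMinOn (fun w => g w + c * ‖w - u‖ ^ 2) Set.univ (P u)) (u v : E) :
    ‖P u - P v‖ ≤ ‖u - v‖ := by
  have key : ∀ u q, g (P u) - g q ≤ 2 * c * inner ℝ (P u - u) (q - P u) := by
    intro u q
    by_contra hcon
    push Not at hcon
    set p := P u
    set A := g p - g q - 2 * c * inner ℝ (p - u) (q - p) with hA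
    have hApos : 0 < A := by linarith
    set B := c * ‖q - p‖ ^ 2 with hB
    have hB0 : 0 ≤ B := by positivity
    have main : ∀ t : ℝ, 0 < t → t ≤ 1 → A ≤ t * B := by
      intro t ht ht1
      have h1 := isMinOn_iff.1 (hP u) ((1 - t) • p + t • q) (Set.mem_univ _)
      have h2 := hg.2 (Set.mem_univ p) (Set.mem_univ q) (by linarith : 0 ≤ 1 - t) ht.le (by ring)
      have h3 : (1 - t) • p + t • q - u = (p - u) + t • (q - p) := by module
      simp only [smul_eq_mul] at h2
      rw [h3] at h1
      have h4 : ‖(p - u) + t • (q - p)‖ ^ 2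
          = ‖p - u‖ ^ 2 + 2 * (t * inner ℝ (p - u) (q - p)) + t ^ 2 * ‖q - p‖ ^ 2 := by
        rw [norm_add_sq_real, inner_smul_right, norm_smul, mul_pow, Real.norm_eq_abs, sq_abs]
      rw [h4] at h1
      have h5 : t * A ≤ t * (t * B) := by
        rw [hA, hB]
        change g p + c * ‖p - u‖ ^ 2 ≤ _ at h1
        nlinarith
      exact le_of_mul_le_mul_left h5 ht
    have h1 := main (min 1 (A / (2 * (B + 1)))) (by positivity) (min_le_left _ _)
    have h2 : min 1 (A / (2 * (B + 1))) * B ≤ A / (2 * (B + 1)) * B :=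
      mul_le_mul_of_nonneg_right (min_le_right _ _) hB0
    have h3 : A / (2 * (B + 1)) * B ≤ A / 2 := by
      rw [div_mul_eq_mul_div, div_le_div_iff₀ (by positivity) (by positivity)]
      nlinarith
    linarith
  have h1 := key u (P v)
  have h2 := key v (P u)
  have h3 : inner ℝ (P u - u) (P v - P u) + inner ℝ (P v - v) (P u - P v)
      = inner ℝ (u - v) (P u - P v) - ‖P u - P v‖ ^ 2 := by
    rw [← real_inner_self_eq_norm_sq]
    simp only [inner_sub_left, inner_sub_right, real_inner_comm]
    ring
  have h4 : 0 ≤ inner ℝ (u - v) (P u - P v) - ‖P u - P v‖ ^ 2 := by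
    rw [← h3]
    by_contra hh
    push Not at hh
    nlinarith
  have h5 := real_inner_le_norm (u - v) (P u - P v)
  by_contra hh
  push Not at hh
  have := norm_nonneg (u - v)
  nlinarith

lemma aux_tele {E : Type*} [NormedAddCommGroup E] (a : ℕ → E) (k t T : ℕ) (ht : t ≤ T) :
    ‖a k - a (k + t)‖ ^ 2 ≤ T * ∑ l ∈ Finset.Icc k (k + T), ‖a (l + 1) - a l‖ ^ 2 := by
  have h1 : ‖a k - a (k + t)‖ ≤ ∑ l ∈ Finset.Ico k (k + t), ‖a (l + 1) - a l‖ := by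
    have := dist_le_Ico_sum_dist a (Nat.le_add_right k t)
    rw [dist_eq_norm] at this
    refine this.trans (Finset.sum_le_sum fun l _ => ?_)
    rw [dist_comm, dist_eq_norm]
  have h2 : ‖a k - a (k + t)‖ ^ 2 ≤ (∑ l ∈ Finset.Ico k (k + t), ‖a (l + 1) - a l‖) ^ 2 := by
    gcongr
  refine h2.trans (sq_sum_le_card_mul_sum_sq.trans ?_)
  have h3 : ((Finset.Ico k (k + t)).card : ℝ) ≤ T := by simpa using ht
  have h4 : ∑ l ∈ Finset.Ico k (k + t), ‖a (l + 1) - a l‖ ^ 2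
      ≤ ∑ l ∈ Finset.Icc k (k + T), ‖a (l + 1) - a l‖ ^ 2 := by
    refine Finset.sum_le_sum_of_subset_of_nonneg ?_ fun _ _ _ => by positivity
    intro l hl
    simp only [Finset.mem_Ico, Finset.mem_Icc] at hl ⊢
    omega
  gcongr

lemma aux_path {E : Type*} [NormedAddCommGroup E] [InnerProductSpace ℝ E] {n : ℕ} (hn : 0 < n)
    (G : Fin n → E → E) (L : ℝ) (hL : 0 < L)
    (hlip : ∀ i u v, ‖G i u - G i v‖ ≤ L * ‖u - v‖)
    (α η : ℝ) (hα : 0 < α) (hη : 0 < η) (P : E → E) (hP : ∀ u v, ‖P u - P v‖ ≤ ‖u - v‖)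
    (ih : ℕ → Fin n) (y x xhat : ℕ → Fin n → E) (xbar : ℕ → E)
    (hy : ∀ j i, y j i = x j i + η • G i (x j i))
    (hxhat : ∀ j i, xhat j i = (2 : ℝ) • x j i - y j i)
    (hxbar : ∀ j, xbar j = P ((n : ℝ)⁻¹ • ∑ i, xhat j i))
    (hstep : ∀ k, y (k + 1) (ih k) = y k (ih k) + α • (xbar k - x k (ih k)))
    (hstep2 : ∀ k i, i ≠ ih k → x (k + 1) i = x k i)
    (T k : ℕ) (t : Fin n → ℕ) (ht : ∀ i, t i ≤ T) :
    (∀ s, ‖xbar s - x s (ih s)‖ ^ 2 ≤ 2 * (1 + L ^ 2 * η ^ 2) / α ^ 2 *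
        ‖x (s + 1) (ih s) - x s (ih s)‖ ^ 2) ∧
    ∑ i, ‖xbar k - x k i‖ ^ 2 ≤ ∑ i, 2 * ‖xbar (k + t i) - x (k + t i) i‖ ^ 2 +
      (8 * T * (1 + L ^ 2 * η ^ 2) / n + 4 * T) * ∑ l ∈ Finset.Icc k (k + T),
        ‖x (l + 1) (ih l) - x l (ih l)‖ ^ 2 := by
  have hn' : (0 : ℝ) < n := by exact_mod_cast hn
  have hsq : ∀ a : ℝ, ((1 + η * L) * a) ^ 2 ≤ 2 * (1 + L ^ 2 * η ^ 2) * a ^ 2 := by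
    intro a
    rw [mul_pow]
    gcongr
    nlinarith [sq_nonneg (1 - η * L)]
  have hG : ∀ l i, ‖η • (G i (x (l + 1) i) - G i (x l i))‖ ≤ η * L * ‖x (l + 1) i - x l i‖ := by
    intro l i
    rw [norm_smul, Real.norm_of_nonneg hη.le, mul_assoc]
    gcongr
    exact hlip _ _ _
  constructor
  · intro s
    have h1 : α • (xbar s - x s (ih s)) = (x (s + 1) (ih s) - x s (ih s))
        + η • (G (ih s) (x (s + 1) (ih s)) - G (ih s) (x s (ih s))) := by
      have h := hstep s
      rw [hy, hy] at h
      have h' : α • (xbar s - x s (ih s)) = (x (s + 1) (ih s) + η • G (ih s) (x (s + 1) (ih s)))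
        - (x s (ih s) + η • G (ih s) (x s (ih s))) := by rw [h]; abel
      rw [h']; module
    have h2 : α * ‖xbar s - x s (ih s)‖ ≤ (1 + η * L) * ‖x (s + 1) (ih s) - x s (ih s)‖ := by
      have : ‖α • (xbar s - x s (ih s))‖ = α * ‖xbar s - x s (ih s)‖ := by
        rw [norm_smul, Real.norm_of_nonneg hα.le]
      rw [← this, h1]
      refine (norm_add_le _ _).trans ?_
      have := hG s (ih s)
      linarith
    have h3 : (α * ‖xbar s - x s (ih s)‖) ^ 2 ≤ _ :=
      (pow_le_pow_left₀ (by positivity) h2 2).trans (hsq _)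
    rw [div_mul_eq_mul_div, le_div_iff₀ (by positivity)]
    nlinarith
  · set S := ∑ l ∈ Finset.Icc k (k + T), ‖x (l + 1) (ih l) - x l (ih l)‖ ^ 2 with hS
    have hS0 : 0 ≤ S := by positivity
    have hbar : ∀ l, ‖xbar (l + 1) - xbar l‖ ^ 2 ≤
        2 * (1 + L ^ 2 * η ^ 2) / n ^ 2 * ‖x (l + 1) (ih l) - x l (ih l)‖ ^ 2 := by
      intro l
      have h1 : ‖xbar (l + 1) - xbar l‖
          ≤ (n : ℝ)⁻¹ * ((1 + η * L) * ‖x (l + 1) (ih l) - x l (ih l)‖) := by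
        rw [hxbar, hxbar]
        refine (hP _ _).trans ?_
        rw [← smul_sub, ← Finset.sum_sub_distrib, norm_smul, Real.norm_of_nonneg (by positivity)]
        gcongr
        rw [Finset.sum_eq_single (ih l)]
        · have : xhat (l + 1) (ih l) - xhat l (ih l) = (x (l + 1) (ih l) - x l (ih l))
              - η • (G (ih l) (x (l + 1) (ih l)) - G (ih l) (x l (ih l))) := by
            rw [hxhat, hxhat, hy, hy]; module
          rw [this]
          refine (norm_sub_le _ _).trans ?_
          have := hG l (ih l)
          linarith
        · intro i _ hi
          rw [hxhat, hxhat, hy, hy, hstep2 l i hi, sub_self]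
        · simp
      refine (pow_le_pow_left₀ (by positivity) h1 2).trans ?_
      rw [mul_pow]
      calc ((n : ℝ)⁻¹) ^ 2 * ((1 + η * L) * ‖x (l + 1) (ih l) - x l (ih l)‖) ^ 2
          ≤ ((n : ℝ)⁻¹) ^ 2 * (2 * (1 + L ^ 2 * η ^ 2) * ‖x (l + 1) (ih l) - x l (ih l)‖ ^ 2) := by
            gcongr; exact hsq _
        _ = _ := by field_simp
    have hA : ∀ i, ‖xbar k - xbar (k + t i)‖ ^ 2 ≤ T * (2 * (1 + L ^ 2 * η ^ 2) / n ^ 2 * S) := by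
      intro i
      refine (aux_tele xbar k (t i) T (ht i)).trans ?_
      gcongr
      rw [hS, Finset.mul_sum]
      exact Finset.sum_le_sum fun l _ => hbar l
    have hB : ∑ i, ‖x k i - x (k + t i) i‖ ^ 2 ≤ T * S := by
      calc ∑ i, ‖x k i - x (k + t i) i‖ ^ 2
          ≤ ∑ i, T * ∑ l ∈ Finset.Icc k (k + T), ‖x (l + 1) i - x l i‖ ^ 2 :=
            Finset.sum_le_sum fun i _ => aux_tele (fun l => x l i) k (t i) T (ht i)
        _ = T * S := by
            rw [← Finset.mul_sum, Finset.sum_comm, hS]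
            congr 1
            refine Finset.sum_congr rfl fun l _ => ?_
            rw [Finset.sum_eq_single (ih l)]
            · intro i _ hi
              rw [hstep2 l i hi]; simp
            · simp
    have hC : ∀ i, ‖xbar k - x k i‖ ^ 2 ≤ 2 * ‖xbar (k + t i) - x (k + t i) i‖ ^ 2 +
        4 * (T * (2 * (1 + L ^ 2 * η ^ 2) / n ^ 2 * S)) + 4 * ‖x k i - x (k + t i) i‖ ^ 2 := by
      intro i
      have h1 : xbar k - x k i = (xbar (k + t i) - x (k + t i) i) +
        ((xbar k - xbar (k + t i)) - (x k i - x (k + t i) i)) := by abel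
      have h2 : ‖xbar k - x k i‖ ≤ ‖xbar (k + t i) - x (k + t i) i‖ +
        (‖xbar k - xbar (k + t i)‖ + ‖x k i - x (k + t i) i‖) := by
        rw [h1]
        refine (norm_add_le _ _).trans ?_
        gcongr
        exact norm_sub_le _ _
      have h3 := pow_le_pow_left₀ (norm_nonneg _) h2 2
      have h4 := hA i
      generalize ‖xbar k - x k i‖ = a at *
      generalize ‖xbar (k + t i) - x (k + t i) i‖ = b at *
      generalize ‖xbar k - xbar (k + t i)‖ = c at *
      generalize ‖x k i - x (k + t i) i‖ = e at *
      nlinarith [sq_nonneg (b - (c + e)), sq_nonneg (c - e)]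
    refine (Finset.sum_le_sum fun i _ => hC i).trans ?_
    rw [Finset.sum_add_distrib, Finset.sum_add_distrib, ← Finset.mul_sum Finset.univ (fun i => ‖x k i - x (k + t i) i‖ ^ 2) (4:ℝ)]
    simp only [Finset.sum_const, Finset.card_univ, Fintype.card_fin, nsmul_eq_mul]
    have : (n : ℝ) * (4 * (T * (2 * (1 + L ^ 2 * η ^ 2) / n ^ 2 * S)))
      = 8 * T * (1 + L ^ 2 * η ^ 2) / n * S := by field_simp; ring
    rw [this]
    nlinarith

lemma aux_condExp {Ω : Type*} {m0 : MeasurableSpace Ω} (μ : Measure Ω) [IsProbabilityMeasure μ]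
    (m : MeasurableSpace Ω) (hm : m ≤ m0) (A : Set Ω) (hA : MeasurableSet[m0] A) (p : ℝ)
    (hp : ∀ᵐ ω ∂μ, p ≤ (μ[Set.indicator A (fun _ => (1 : ℝ)) | m]) ω)
    (Z : Ω → ℝ) (hZ0 : ∀ ω, 0 ≤ Z ω) (hZ : Integrable Z μ)
    (hmeas : Measurable[m] Z ∨ MeasurableSet[m] A) :
    p * ∫ ω, Z ω ∂μ ≤ ∫ ω, A.indicator Z ω ∂μ := by
  have hAi : Integrable (A.indicator (fun _ => (1 : ℝ))) μ := (integrable_const 1).indicator hA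
  have hZA : A.indicator Z = Z * A.indicator (fun _ => (1 : ℝ)) := by
    ext ω; by_cases h : ω ∈ A <;> simp [h]
  have hZAi : Integrable (A.indicator Z) μ := hZ.indicator hA
  rw [← integral_const_mul]
  rcases hmeas with h | h
  · have h1 := condExp_mul_of_stronglyMeasurable_left (μ := μ) (m := m) h.stronglyMeasurable
      (hZA ▸ hZAi) hAi
    rw [← integral_condExp hm (f := A.indicator Z), hZA]
    refine integral_mono_ae (hZ.const_mul p) integrable_condExp ?_
    filter_upwards [h1, hp] with ω h2 h3
    rw [h2, Pi.mul_apply, mul_comm]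
    exact mul_le_mul_of_nonneg_left h3 (hZ0 ω)
  · refine integral_mono_ae (hZ.const_mul p) hZAi ?_
    rw [condExp_of_stronglyMeasurable hm
      ((stronglyMeasurable_const).indicator h) hAi] at hp
    filter_upwards [hp] with ω h3
    rw [hZA, Pi.mul_apply, mul_comm]
    exact mul_le_mul_of_nonneg_left h3 (hZ0 ω)


/-- **Residual bound for asyncFedDR (Lemma B.3 / eq. (asdr_thm_eq11)).**
For the asynchronous FedDR process with delays bounded by `τ`, `d̂^j_{î_j} = 0`, and
conditional activation probabilities bounded below by `p̂` within a window of length `T`,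
one has for every `k ≥ τ`:
`Σᵢ E[‖x̄ᵏ − xᵢᵏ‖²] ≤ D Σ_{t=k−τ}^{k+T} E[‖x_{î_t}^{t+1} − x_{î_t}^t‖²]` with
`D := [8α²(1+L²η²)(τ² + 2Tnp̂) + 8n²(1+L²η² + Tα²p̂)]/(p̂α²n²)`. -/
theorem asyncFedDR_residual_bound {pdim n : ℕ} (hn : 0 < n)
    (f : Fin n → EuclideanSpace ℝ (Fin pdim) → ℝ) (L : ℝ) (hL : 0 < L)
    (hdiff : ∀ i, Differentiable ℝ (f i))
    (hlip : ∀ i u v, ‖gradient (f i) u - gradient (f i) v‖ ≤ L * ‖u - v‖)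
    (g : EuclideanSpace ℝ (Fin pdim) → ℝ)
    (hgconv : ConvexOn ℝ Set.univ g) (hglsc : LowerSemicontinuous g)
    (α η : ℝ) (hα : 0 < α) (hη : 0 < η)
    (τ T : ℕ) (phat : ℝ) (hphat : 0 < phat)
    (proxg : EuclideanSpace ℝ (Fin pdim) → EuclideanSpace ℝ (Fin pdim))
    (hproxg : ∀ u, IsMinOn (fun w => g w + (1 / (2 * η)) * ‖w - u‖ ^ 2) Set.univ (proxg u))
    (hproxg_unique : ∀ u w,
      IsMinOn (fun w' => g w' + (1 / (2 * η)) * ‖w' - u‖ ^ 2) Set.univ w → w = proxg u)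
    -- the asynchronous probabilistic model
    {Ω : Type*} [MeasurableSpace Ω] (μ : Measure Ω) [IsProbabilityMeasure μ]
    (ihat : ℕ → Ω → Fin n) (d : ℕ → Ω → Fin n → ℕ)
    (hξmeas : ∀ k, @Measurable Ω (Fin n × (Fin n → ℕ)) _ ⊤ (fun ω => (ihat k ω, d k ω)))
    (hdelay : ∀ k ω i, d k ω i ≤ τ ∧ d k ω i ≤ k)
    (hdelay_active : ∀ k ω, d k ω (ihat k ω) = 0)
    (hact : ∀ i : Fin n, ∀ k : ℕ, ∃ t ≤ T, ∀ᵐ ω ∂μ,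
      phat ≤ (μ[Set.indicator {ω' | ihat (k + t) ω' = i} (fun _ => (1 : ℝ)) |
        ⨆ l ∈ Finset.range (k + t - 1 + 1),
          MeasurableSpace.comap (fun ω' => (ihat l ω', d l ω'))
            (⊤ : MeasurableSpace (Fin n × (Fin n → ℕ)))]) ω)
    -- the iterates of the process
    (y x xhat : ℕ → Fin n → Ω → EuclideanSpace ℝ (Fin pdim))
    (xbar : ℕ → Ω → EuclideanSpace ℝ (Fin pdim))
    (hy : ∀ j, ∀ᵐ ω ∂μ, ∀ i, y j i ω = x j i ω + η • gradient (f i) (x j i ω))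
    (hxhat : ∀ j, ∀ᵐ ω ∂μ, ∀ i, xhat j i ω = (2 : ℝ) • x j i ω - y j i ω)
    (hxbar : ∀ j, ∀ᵐ ω ∂μ, xbar j ω = proxg ((n : ℝ)⁻¹ • ∑ i, xhat j i ω))
    (hstep : ∀ k, ∀ᵐ ω ∂μ,
      (y (k + 1) (ihat k ω) ω = y k (ihat k ω) ω
          + α • (xbar (k - d k ω (ihat k ω)) ω - x k (ihat k ω) ω) ∧
        IsMinOn (fun u => f (ihat k ω) u
            + (1 / (2 * η)) * ‖u - y (k + 1) (ihat k ω) ω‖ ^ 2)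
          Set.univ (x (k + 1) (ihat k ω) ω)) ∧
      (∀ i, i ≠ ihat k ω →
        y (k + 1) i ω = y k i ω ∧ x (k + 1) i ω = x k i ω ∧
        xhat (k + 1) i ω = xhat k i ω))
    -- adaptedness: the step-(k+1) iterates are `F_k`-measurable
    (hadapt : ∀ k,
      Measurable[⨆ l ∈ Finset.range (k + 1),
        MeasurableSpace.comap (fun ω => (ihat l ω, d l ω))
          (⊤ : MeasurableSpace (Fin n × (Fin n → ℕ)))] (xbar (k + 1)) ∧
      ∀ i,
        Measurable[⨆ l ∈ Finset.range (k + 1),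
          MeasurableSpace.comap (fun ω => (ihat l ω, d l ω))
            (⊤ : MeasurableSpace (Fin n × (Fin n → ℕ)))] (fun ω => x (k + 1) i ω) ∧
        Measurable[⨆ l ∈ Finset.range (k + 1),
          MeasurableSpace.comap (fun ω => (ihat l ω, d l ω))
            (⊤ : MeasurableSpace (Fin n × (Fin n → ℕ)))] (fun ω => y (k + 1) i ω) ∧
        Measurable[⨆ l ∈ Finset.range (k + 1),
          MeasurableSpace.comap (fun ω => (ihat l ω, d l ω))
            (⊤ : MeasurableSpace (Fin n × (Fin n → ℕ)))] (fun ω => xhat (k + 1) i ω))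
    -- integrability of the relevant squared norms
    (hint1 : ∀ k i, Integrable (fun ω => ‖xbar k ω - x k i ω‖ ^ 2) μ)
    (hint2 : ∀ t, Integrable
      (fun ω => ‖x (t + 1) (ihat t ω) ω - x t (ihat t ω) ω‖ ^ 2) μ)
    (D : ℝ)
    (hD : D = (8 * α ^ 2 * (1 + L ^ 2 * η ^ 2) * ((τ : ℝ) ^ 2 + 2 * T * n * phat)
        + 8 * (n : ℝ) ^ 2 * (1 + L ^ 2 * η ^ 2 + T * α ^ 2 * phat))
        / (phat * α ^ 2 * (n : ℝ) ^ 2)) :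
    ∀ k : ℕ, τ ≤ k →
      ∑ i, ∫ ω, ‖xbar k ω - x k i ω‖ ^ 2 ∂μ ≤
        D * ∑ t ∈ Finset.Icc (k - τ) (k + T),
            ∫ ω, ‖x (t + 1) (ihat t ω) ω - x t (ihat t ω) ω‖ ^ 2 ∂μ := by
  intro k hk
  have hn' : (0 : ℝ) < n := by exact_mod_cast hn
  choose t ht htp using fun i => hact i k
  have hP : ∀ u v, ‖proxg u - proxg v‖ ≤ ‖u - v‖ :=
    aux_prox_nonexp g hgconv (1 / (2 * η)) (by positivity) proxg hproxg
  set e : ℕ → Ω → ℝ := fun l ω => ‖x (l + 1) (ihat l ω) ω - x l (ihat l ω) ω‖ ^ 2 with he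
  set Z : Fin n → Ω → ℝ := fun i ω => ‖xbar (k + t i) ω - x (k + t i) i ω‖ ^ 2 with hZ
  set A : Fin n → Set Ω := fun i => {ω | ihat (k + t i) ω = i} with hA
  set C1 : ℝ := 2 * (1 + L ^ 2 * η ^ 2) / α ^ 2 with hC1
  have hC10 : 0 ≤ C1 := by positivity
  set C2 : ℝ := 8 * T * (1 + L ^ 2 * η ^ 2) / n + 4 * T with hC2
  have hC20 : 0 ≤ C2 := by positivity
  have hpath : ∀ᵐ ω ∂μ, (∀ s, ‖xbar s ω - x s (ihat s ω) ω‖ ^ 2 ≤ C1 * e s ω) ∧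
      ∑ i, ‖xbar k ω - x k i ω‖ ^ 2 ≤ ∑ i, 2 * Z i ω +
        C2 * ∑ l ∈ Finset.Icc k (k + T), e l ω := by
    filter_upwards [ae_all_iff.2 hy, ae_all_iff.2 hxhat, ae_all_iff.2 hxbar, ae_all_iff.2 hstep]
      with ω h1 h2 h3 h4
    refine aux_path hn (fun i => gradient (f i)) L hL hlip α η hα hη proxg hP
      (fun s => ihat s ω) (fun s i => y s i ω) (fun s i => x s i ω) (fun s i => xhat s i ω)
      (fun s => xbar s ω) h1 h2 h3 ?_ (fun s i hi => ((h4 s).2 i hi).2.1) T k t ht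
    intro s
    have := (h4 s).1.1
    rw [hdelay_active s ω] at this
    simpa using this
  have hcm : ∀ l, MeasurableSpace.comap (fun ω' => (ihat l ω', d l ω'))
            (⊤ : MeasurableSpace (Fin n × (Fin n → ℕ))) ≤ ‹MeasurableSpace Ω› := by
    intro l
    exact Measurable.comap_le (hξmeas l)
  have hF : ∀ N, (⨆ l ∈ Finset.range N, MeasurableSpace.comap (fun ω' => (ihat l ω', d l ω'))
            (⊤ : MeasurableSpace (Fin n × (Fin n → ℕ)))) ≤ ‹MeasurableSpace Ω› := by
    intro N
    exact iSup₂_le fun l _ => hcm l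
  have hAc : ∀ l i, MeasurableSet[MeasurableSpace.comap (fun ω' => (ihat l ω', d l ω'))
            (⊤ : MeasurableSpace (Fin n × (Fin n → ℕ)))] {ω | ihat l ω = i} := by
    intro l i
    exact ⟨{q | q.1 = i}, trivial, rfl⟩
  have hAm : ∀ i, MeasurableSet (A i) := fun i => hcm _ _ (hAc _ i)
  have hZi : ∀ i, Integrable (Z i) μ := fun i => hint1 _ _
  have hcond : ∀ i, phat * ∫ ω, Z i ω ∂μ ≤ ∫ ω, (A i).indicator (Z i) ω ∂μ := by
    intro i
    refine aux_condExp μ _ (hF _) (A i) (hAm i) phat (htp i) (Z i) (fun ω => by positivity)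
      (hZi i) ?_
    rcases Nat.eq_zero_or_pos (k + t i) with h0 | h0
    · right
      have h1 := hAc (k + t i) i
      refine (le_iSup₂_of_le (k + t i) ?_ le_rfl : MeasurableSpace.comap _ _ ≤ _) _ h1
      simp [h0]
    · left
      obtain ⟨N, hN⟩ : ∃ N, k + t i = N + 1 := ⟨k + t i - 1, by omega⟩
      have h1 := hadapt N
      have hN2 : k + t i - 1 + 1 = N + 1 := by omega
      rw [hN2]
      simp only [hZ, hN]
      exact (measurable_norm.comp (h1.1.sub (h1.2 i).1)).pow_const 2
  have hei : ∀ l, Integrable (e l) μ := hint2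
  have hsumi : Integrable (fun ω => ∑ l ∈ Finset.Icc k (k + T), e l ω) μ :=
    integrable_finsetSum _ fun l _ => hei l
  have he0 : ∀ l ω, 0 ≤ e l ω := fun l ω => by positivity
  have hind : ∑ i, ∫ ω, (A i).indicator (Z i) ω ∂μ ≤
      C1 * ∫ ω, ∑ l ∈ Finset.Icc k (k + T), e l ω ∂μ := by
    rw [← integral_finsetSum _ (fun i _ => (hZi i).indicator (hAm i)), ← integral_const_mul]
    refine integral_mono_ae (integrable_finsetSum _ (fun i _ => (hZi i).indicator (hAm i)))
      (hsumi.const_mul _) ?_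
    filter_upwards [hpath] with ω hω
    calc ∑ i, (A i).indicator (Z i) ω
        ≤ ∑ i, ∑ l ∈ Finset.Icc k (k + T), (if ihat l ω = i then C1 * e l ω else 0) := by
          refine Finset.sum_le_sum fun i _ => ?_
          have h1 : (A i).indicator (Z i) ω ≤
              (if ihat (k + t i) ω = i then C1 * e (k + t i) ω else 0) := by
            by_cases h : ihat (k + t i) ω = i
            · have h2 := hω.1 (k + t i)
              rw [Set.indicator_of_mem (show ω ∈ A i from h), if_pos h]
              rw [h] at h2
              exact h2
            · rw [Set.indicator_of_notMem (show ω ∉ A i from h), if_neg h]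
          refine h1.trans (Finset.single_le_sum
            (f := fun l => if ihat l ω = i then C1 * e l ω else 0) (fun l _ => ?_) ?_)
          · have := he0 l ω
            split_ifs
            · exact mul_nonneg hC10 this
            · exact le_rfl
          · have := ht i
            simp only [Finset.mem_Icc]; omega
      _ = C1 * ∑ l ∈ Finset.Icc k (k + T), e l ω := by
          rw [Finset.sum_comm, Finset.mul_sum]
          refine Finset.sum_congr rfl fun l _ => ?_
          simp
  have hmain : ∑ i, ∫ ω, ‖xbar k ω - x k i ω‖ ^ 2 ∂μ ≤
      2 * ∑ i, ∫ ω, Z i ω ∂μ + C2 * ∫ ω, ∑ l ∈ Finset.Icc k (k + T), e l ω ∂μ := by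
    rw [← integral_finsetSum _ (fun i _ => hint1 k i), ← integral_finsetSum _ (fun i _ => hZi i),
      ← integral_const_mul, ← integral_const_mul, ← integral_add
        ((integrable_finsetSum _ (fun i _ => hZi i)).const_mul _) (hsumi.const_mul _)]
    refine integral_mono_ae (integrable_finsetSum _ (fun i _ => hint1 k i))
      (((integrable_finsetSum _ (fun i _ => hZi i)).const_mul _).add (hsumi.const_mul _)) ?_
    filter_upwards [hpath] with ω hω
    have := hω.2
    rw [← Finset.mul_sum] at this
    exact this
  have hZs : ∑ i, ∫ ω, Z i ω ∂μ ≤ C1 / phat * ∫ ω, ∑ l ∈ Finset.Icc k (k + T), e l ω ∂μ := by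
    have h1 : phat * ∑ i, ∫ ω, Z i ω ∂μ ≤
        C1 * ∫ ω, ∑ l ∈ Finset.Icc k (k + T), e l ω ∂μ := by
      rw [Finset.mul_sum]
      exact (Finset.sum_le_sum fun i _ => hcond i).trans hind
    rw [div_mul_eq_mul_div, le_div_iff₀ hphat]
    linarith
  rw [integral_finsetSum _ (fun l _ => hei l)] at hmain hZs
  set S := ∑ l ∈ Finset.Icc k (k + T), ∫ ω, e l ω ∂μ with hS
  have hI0 : ∀ l, 0 ≤ ∫ ω, e l ω ∂μ := fun l => integral_nonneg (he0 l)
  have hS0 : 0 ≤ S := Finset.sum_nonneg fun l _ => hI0 l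
  have hSS : S ≤ ∑ l ∈ Finset.Icc (k - τ) (k + T), ∫ ω, e l ω ∂μ := by
    refine Finset.sum_le_sum_of_subset_of_nonneg ?_ fun l _ _ => hI0 l
    exact Finset.Icc_subset_Icc (Nat.sub_le _ _) le_rfl
  have hDe : D = 8 * (1 + L ^ 2 * η ^ 2) * τ ^ 2 / (phat * n ^ 2)
      + 16 * T * (1 + L ^ 2 * η ^ 2) / n
      + 8 * (1 + L ^ 2 * η ^ 2) / (phat * α ^ 2) + 8 * T := by
    rw [hD]; field_simp; ring
  have hDC : 2 * (C1 / phat) + C2 ≤ D := by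
    rw [hDe, hC1, hC2]
    have h1 : 2 * (2 * (1 + L ^ 2 * η ^ 2) / α ^ 2 / phat)
      = 4 * ((1 + L ^ 2 * η ^ 2) / (phat * α ^ 2)) := by field_simp; ring
    have h2 : 0 ≤ (1 + L ^ 2 * η ^ 2) / (phat * α ^ 2) := by positivity
    have h3 : 0 ≤ T * (1 + L ^ 2 * η ^ 2) / n := by positivity
    have h4 : 0 ≤ 8 * (1 + L ^ 2 * η ^ 2) * τ ^ 2 / (phat * n ^ 2) := by positivity
    have h5 : (0 : ℝ) ≤ T := by positivity
    rw [h1]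
    have e1 : 16 * T * (1 + L ^ 2 * η ^ 2) / n = 16 * (T * (1 + L ^ 2 * η ^ 2) / n) := by ring
    have e2 : 8 * T * (1 + L ^ 2 * η ^ 2) / n = 8 * (T * (1 + L ^ 2 * η ^ 2) / n) := by ring
    have e3 : 8 * (1 + L ^ 2 * η ^ 2) / (phat * α ^ 2)
      = 8 * ((1 + L ^ 2 * η ^ 2) / (phat * α ^ 2)) := by ring
    rw [e1, e2, e3]
    linarith
  have hD0 : 0 ≤ D := le_trans (by positivity) hDC
  calc _ ≤ (2 * (C1 / phat) + C2) * S := by linarith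
    _ ≤ D * S := by gcongr
    _ ≤ _ := by gcongr
end
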